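/- (Fidelity of the reference value.) Consider any δ ∈ (0,1) and suppose the constant c_b > 0 in the Q-EarlySettled-Advantage algorithm is sufficiently large. Then with probability at least 1 − δ, the iterates satisfy |V_h^k(s) − V_h^{R,k}(s)| ≤ 2 for all (k, h, s) ∈ [K] × [H] × S. -/

import Mathlib

open MeasureTheory Finset

/-- A finite-horizon MDP with horizon `H`, non-stationary transition kernels `P h s a ·`,
and deterministic rewards `r h s a ∈ [0,1]`. -/
structure MDP (S A : Type) [Fintype S] [Fintype A] where
  H : ℕ
  P : ℕ → S → A → S → ℝ
  r : ℕ → S → A → ℝ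
  H_pos : 1 ≤ H
  P_nonneg : ∀ h s a s', 0 ≤ P h s a s'
  P_sum_one : ∀ h s a, ∑ s', P h s a s' = 1
  r_nonneg : ∀ h s a, 0 ≤ r h s a
  r_le_one : ∀ h s a, r h s a ≤ 1

namespace MDP

variable {S A : Type} [Fintype S] [Fintype A] [Nonempty S] [Nonempty A]

/-- Optimal Q-function, defined by backward induction on the remaining number of steps
(`Qstar` below instantiates the fuel as `H + 1 - h`, so that values at step `H + 1`
vanish and the Bellman optimality equation holds for `1 ≤ h ≤ H`). -/
noncomputable def QstarAux (M : MDP S A) : ℕ → ℕ → S → A → ℝ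
  | 0, _, _, _ => 0
  | (fuel + 1), h, s, a =>
      M.r h s a + ∑ s' : S, M.P h s a s' *
        (Finset.univ.sup' Finset.univ_nonempty fun a' => QstarAux M fuel (h + 1) s' a')

/-- The optimal Q-function `Q_h^⋆`. -/
noncomputable def Qstar (M : MDP S A) (h : ℕ) (s : S) (a : A) : ℝ :=
  QstarAux M (M.H + 1 - h) h s a

/-- The optimal value function `V_h^⋆`. -/
noncomputable def Vstar (M : MDP S A) (h : ℕ) (s : S) : ℝ :=
  Finset.univ.sup' Finset.univ_nonempty fun a => M.Qstar h s a

/-- Value function `V_h^π` of a deterministic policy `π`, by backward induction. -/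
noncomputable def VpolAux (M : MDP S A) (π : ℕ → S → A) : ℕ → ℕ → S → ℝ
  | 0, _, _ => 0
  | (fuel + 1), h, s =>
      M.r h s (π h s) + ∑ s' : S, M.P h s (π h s) s' * VpolAux M π fuel (h + 1) s'

/-- The value function `V_h^π` of a deterministic policy `π`. -/
noncomputable def Vpol (M : MDP S A) (π : ℕ → S → A) (h : ℕ) (s : S) : ℝ :=
  VpolAux M π (M.H + 1 - h) h s

/-- Conditional variance `Var_{h,s,a}(V) = P_{h,s,a}(V²) - (P_{h,s,a} V)²`. -/
noncomputable def varP (M : MDP S A) (h : ℕ) (s : S) (a : A) (V : S → ℝ) : ℝ :=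
  (∑ s' : S, M.P h s a s' * (V s') ^ 2) - (∑ s' : S, M.P h s a s' * V s') ^ 2

end MDP

/-- The Q-learning rate `η_n = (H+1)/(H+n)`. -/
noncomputable def lr (H n : ℕ) : ℝ := (H + 1 : ℝ) / (H + n)

/-- `η_n^N`: equal to `η_n ∏_{i=n+1}^N (1 - η_i)` for `1 ≤ n ≤ N` (hence `η_n` for `N = n`),
`0` for `N < n`, and `η_0^N = ∏_{i=1}^N (1 - η_i)` (which is `1` if `N = 0` and `0` otherwise,
since `1 - η_1 = 0`). -/
noncomputable def lrProd (H n N : ℕ) : ℝ :=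
  if N < n then 0
  else (if n = 0 then 1 else lr H n) * ∏ i ∈ Finset.Icc (n + 1) N, (1 - lr H i)

/-- The log factor `log(SAT/δ)` with `T = KH`. -/
noncomputable def iota (S A : Type) [Fintype S] [Fintype A] (K H : ℕ) (δ : ℝ) : ℝ :=
  Real.log ((Fintype.card S : ℝ) * (Fintype.card A) * (K * H) / δ)

/-- The trajectory `(s_h^k, a_h^k)` is generated by online interaction with the MDP `M`:
states and actions are adapted to the filtration `𝓕` (with time index `(k-1)H + h`
corresponding to step `h` of episode `k`), and conditionally on the history,
`s_{h+1}^k ∼ P_h(· | s_h^k, a_h^k)`. -/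
def IsMDPTrajectory {S A : Type} [Fintype S] [Fintype A] [DecidableEq S]
    [MeasurableSpace S] [MeasurableSpace A]
    {Ω : Type} [m0 : MeasurableSpace Ω] (μ : Measure Ω)
    (M : MDP S A) (K : ℕ) (𝓕 : Filtration ℕ m0)
    (st : ℕ → ℕ → Ω → S) (ac : ℕ → ℕ → Ω → A) : Prop :=
  (∀ k ∈ Finset.Icc 1 K, ∀ h ∈ Finset.Icc 1 (M.H + 1),
      Measurable[𝓕 ((k - 1) * M.H + h)] (st k h)) ∧
  (∀ k ∈ Finset.Icc 1 K, ∀ h ∈ Finset.Icc 1 M.H,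
      Measurable[𝓕 ((k - 1) * M.H + h)] (ac k h)) ∧
  (∀ k ∈ Finset.Icc 1 K, ∀ h ∈ Finset.Icc 1 M.H, ∀ s' : S,
      μ[(fun ω => if st k (h + 1) ω = s' then (1 : ℝ) else 0) | 𝓕 ((k - 1) * M.H + h)]
        =ᵐ[μ] fun ω => M.P h (st k h ω) (ac k h ω) s')

/-- The **Q-EarlySettled-Advantage** algorithm (Algorithms 1–2 of the paper), run for `K`
episodes on the MDP `M` with bonus constant `cb` and failure probability `δ`.
The fields record the trajectory `(s_h^k, a_h^k)`, the greedy policies `π^k`, the visit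
counters, all Q/value estimates and auxiliary statistics, together with the initialization
and update equations defining the algorithm.  A quantity carrying episode index `k`
denotes its value at the *beginning* of episode `k` (`N k` is the counter at the *end*
of episode `k`, with `N 0 = 0`); `kvis n h s a` is the episode of the `n`-th visit of
`(s,a)` at step `h`. -/
structure QLAlg {S A : Type} [Fintype S] [Fintype A] [Nonempty S] [Nonempty A]
    [DecidableEq S] [DecidableEq A] (M : MDP S A) (K : ℕ) (cb δ : ℝ) where
  /-- `s_h^k` : the state visited at step `h` of episode `k` -/
  st : ℕ → ℕ → S
  /-- `a_h^k` : the action taken at step `h` of episode `k` -/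
  ac : ℕ → ℕ → A
  /-- `π^k` : the greedy policy executed during episode `k` -/
  pol : ℕ → ℕ → S → A
  /-- `N_h^k(s,a)` : number of visits of `(s,a)` at step `h` by the end of episode `k` -/
  N : ℕ → ℕ → S → A → ℕ
  /-- the combined Q-estimate `Q_h^k` -/
  Q : ℕ → ℕ → S → A → ℝ
  /-- the Hoeffding-bonus optimistic estimate `Q_h^{UCB,k}` -/
  QUCB : ℕ → ℕ → S → A → ℝ
  /-- the pessimistic estimate `Q_h^{LCB,k}` -/
  QLCB : ℕ → ℕ → S → A → ℝ
  /-- the reference-advantage estimate `Q_h^{R,k}` -/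
  QR : ℕ → ℕ → S → A → ℝ
  /-- `V_h^k` -/
  V : ℕ → ℕ → S → ℝ
  /-- `V_h^{LCB,k}` -/
  VLCB : ℕ → ℕ → S → ℝ
  /-- the reference value `V_h^{R,k}` -/
  VR : ℕ → ℕ → S → ℝ
  /-- the flag `u_ref^k` governing the final reference update -/
  uref : ℕ → ℕ → S → Prop
  /-- running mean `μ_h^{ref,k}` of the reference -/
  muRef : ℕ → ℕ → S → A → ℝ
  /-- running second moment `σ_h^{ref,k}` of the reference -/
  sigRef : ℕ → ℕ → S → A → ℝ
  /-- running weighted mean `μ_h^{adv,k}` of the advantage -/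
  muAdv : ℕ → ℕ → S → A → ℝ
  /-- running weighted second moment `σ_h^{adv,k}` of the advantage -/
  sigAdv : ℕ → ℕ → S → A → ℝ
  /-- the aggregated bonus `B_h^{R,k}` -/
  BR : ℕ → ℕ → S → A → ℝ
  /-- the bonus difference `δ_h^{R,k}` -/
  dR : ℕ → ℕ → S → A → ℝ
  /-- `bR k h` : the exploration bonus `b_h^R` computed at step `h` of episode `k` -/
  bR : ℕ → ℕ → ℝ
  /-- `kvis n h s a = k_h^n(s,a)` : the episode of the `n`-th visit of `(s,a)` at step `h` -/
  kvis : ℕ → ℕ → S → A → ℕ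
  greedy : ∀ k h s a, Q k h s a ≤ Q k h s (pol k h s)
  act_eq : ∀ k h, ac k h = pol k h (st k h)
  N_init : ∀ h s a, N 0 h s a = 0
  N_upd : ∀ k ∈ Icc 1 K, ∀ h ∈ Icc 1 M.H, ∀ s a,
    N k h s a = N (k - 1) h s a + (if s = st k h ∧ a = ac k h then 1 else 0)
  Q_init : ∀ h ∈ Icc 1 M.H, ∀ s a, Q 1 h s a = M.H
  QUCB_init : ∀ h ∈ Icc 1 M.H, ∀ s a, QUCB 1 h s a = M.H
  QR_init : ∀ h ∈ Icc 1 M.H, ∀ s a, QR 1 h s a = M.H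
  QLCB_init : ∀ h ∈ Icc 1 M.H, ∀ s a, QLCB 1 h s a = 0
  V_init : ∀ h ∈ Icc 1 M.H, ∀ s, V 1 h s = M.H
  VR_init : ∀ h ∈ Icc 1 M.H, ∀ s, VR 1 h s = M.H
  VLCB_init : ∀ h ∈ Icc 1 M.H, ∀ s, VLCB 1 h s = 0
  uref_init : ∀ h s, uref 1 h s
  mom_init : ∀ h s a, muRef 1 h s a = 0 ∧ sigRef 1 h s a = 0 ∧ muAdv 1 h s a = 0 ∧
    sigAdv 1 h s a = 0 ∧ BR 1 h s a = 0 ∧ dR 1 h s a = 0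
  V_terminal : ∀ k s, V k (M.H + 1) s = 0 ∧ VR k (M.H + 1) s = 0 ∧ VLCB k (M.H + 1) s = 0
  QUCB_upd : ∀ k ∈ Icc 1 K, ∀ h ∈ Icc 1 M.H, ∀ s a,
    QUCB (k + 1) h s a =
      if s = st k h ∧ a = ac k h then
        (1 - lr M.H (N k h s a)) * QUCB k h s a
          + lr M.H (N k h s a) *
            (M.r h s a + V k (h + 1) (st k (h + 1))
              + cb * Real.sqrt ((M.H : ℝ) ^ 3 * iota S A K M.H δ / (N k h s a)))
      else QUCB k h s a
  QLCB_upd : ∀ k ∈ Icc 1 K, ∀ h ∈ Icc 1 M.H, ∀ s a,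
    QLCB (k + 1) h s a =
      if s = st k h ∧ a = ac k h then
        (1 - lr M.H (N k h s a)) * QLCB k h s a
          + lr M.H (N k h s a) *
            (M.r h s a + VLCB k (h + 1) (st k (h + 1))
              - cb * Real.sqrt ((M.H : ℝ) ^ 3 * iota S A K M.H δ / (N k h s a)))
      else QLCB k h s a
  muRef_upd : ∀ k ∈ Icc 1 K, ∀ h ∈ Icc 1 M.H, ∀ s a,
    muRef (k + 1) h s a =
      if s = st k h ∧ a = ac k h then
        (1 - 1 / (N k h s a : ℝ)) * muRef k h s a
          + (1 / (N k h s a : ℝ)) * VR k (h + 1) (st k (h + 1))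
      else muRef k h s a
  sigRef_upd : ∀ k ∈ Icc 1 K, ∀ h ∈ Icc 1 M.H, ∀ s a,
    sigRef (k + 1) h s a =
      if s = st k h ∧ a = ac k h then
        (1 - 1 / (N k h s a : ℝ)) * sigRef k h s a
          + (1 / (N k h s a : ℝ)) * (VR k (h + 1) (st k (h + 1))) ^ 2
      else sigRef k h s a
  muAdv_upd : ∀ k ∈ Icc 1 K, ∀ h ∈ Icc 1 M.H, ∀ s a,
    muAdv (k + 1) h s a =
      if s = st k h ∧ a = ac k h then
        (1 - lr M.H (N k h s a)) * muAdv k h s a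
          + lr M.H (N k h s a) * (V k (h + 1) (st k (h + 1)) - VR k (h + 1) (st k (h + 1)))
      else muAdv k h s a
  sigAdv_upd : ∀ k ∈ Icc 1 K, ∀ h ∈ Icc 1 M.H, ∀ s a,
    sigAdv (k + 1) h s a =
      if s = st k h ∧ a = ac k h then
        (1 - lr M.H (N k h s a)) * sigAdv k h s a
          + lr M.H (N k h s a) *
              (V k (h + 1) (st k (h + 1)) - VR k (h + 1) (st k (h + 1))) ^ 2
      else sigAdv k h s a
  BR_upd : ∀ k ∈ Icc 1 K, ∀ h ∈ Icc 1 M.H, ∀ s a,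
    BR (k + 1) h s a =
      if s = st k h ∧ a = ac k h then
        cb * Real.sqrt (iota S A K M.H δ / (N k h s a)) *
          (Real.sqrt (sigRef (k + 1) h s a - (muRef (k + 1) h s a) ^ 2)
            + Real.sqrt (M.H) * Real.sqrt (sigAdv (k + 1) h s a - (muAdv (k + 1) h s a) ^ 2))
      else BR k h s a
  dR_upd : ∀ k ∈ Icc 1 K, ∀ h ∈ Icc 1 M.H, ∀ s a,
    dR (k + 1) h s a =
      if s = st k h ∧ a = ac k h then BR (k + 1) h s a - BR k h s a else dR k h s a
  bR_def : ∀ k ∈ Icc 1 K, ∀ h ∈ Icc 1 M.H,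
    bR k h = BR (k + 1) h (st k h) (ac k h)
      + (1 - lr M.H (N k h (st k h) (ac k h))) * dR (k + 1) h (st k h) (ac k h)
          / lr M.H (N k h (st k h) (ac k h))
      + cb * (M.H : ℝ) ^ 2 * iota S A K M.H δ
          / (N k h (st k h) (ac k h) : ℝ) ^ ((3 : ℝ) / 4)
  QR_upd : ∀ k ∈ Icc 1 K, ∀ h ∈ Icc 1 M.H, ∀ s a,
    QR (k + 1) h s a =
      if s = st k h ∧ a = ac k h then
        (1 - lr M.H (N k h s a)) * QR k h s a
          + lr M.H (N k h s a) *
            (M.r h s a + V k (h + 1) (st k (h + 1)) - VR k (h + 1) (st k (h + 1))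
              + muRef (k + 1) h s a + bR k h)
      else QR k h s a
  Q_upd : ∀ k ∈ Icc 1 K, ∀ h ∈ Icc 1 M.H, ∀ s a,
    Q (k + 1) h s a =
      if s = st k h ∧ a = ac k h then
        min (QR (k + 1) h s a) (min (QUCB (k + 1) h s a) (Q k h s a))
      else Q k h s a
  V_upd : ∀ k ∈ Icc 1 K, ∀ h ∈ Icc 1 M.H, ∀ s,
    V (k + 1) h s =
      if s = st k h then Finset.univ.sup' Finset.univ_nonempty (fun a => Q (k + 1) h s a)
      else V k h s
  VLCB_upd : ∀ k ∈ Icc 1 K, ∀ h ∈ Icc 1 M.H, ∀ s,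
    VLCB (k + 1) h s =
      if s = st k h then
        max (Finset.univ.sup' Finset.univ_nonempty (fun a => QLCB (k + 1) h s a)) (VLCB k h s)
      else VLCB k h s
  VR_upd_pos : ∀ k ∈ Icc 1 K, ∀ h ∈ Icc 1 M.H,
    (1 < V (k + 1) h (st k h) - VLCB (k + 1) h (st k h) ∨ uref k h (st k h)) →
      VR (k + 1) h (st k h) = V (k + 1) h (st k h)
  VR_upd_neg : ∀ k ∈ Icc 1 K, ∀ h ∈ Icc 1 M.H,
    ¬(1 < V (k + 1) h (st k h) - VLCB (k + 1) h (st k h) ∨ uref k h (st k h)) →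
      VR (k + 1) h (st k h) = VR k h (st k h)
  VR_upd_other : ∀ k ∈ Icc 1 K, ∀ h ∈ Icc 1 M.H, ∀ s, s ≠ st k h →
    VR (k + 1) h s = VR k h s
  uref_upd_pos : ∀ k ∈ Icc 1 K, ∀ h ∈ Icc 1 M.H,
    1 < V (k + 1) h (st k h) - VLCB (k + 1) h (st k h) → uref (k + 1) h (st k h)
  uref_upd_neg : ∀ k ∈ Icc 1 K, ∀ h ∈ Icc 1 M.H,
    ¬(1 < V (k + 1) h (st k h) - VLCB (k + 1) h (st k h)) → ¬uref (k + 1) h (st k h)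
  uref_upd_other : ∀ k ∈ Icc 1 K, ∀ h ∈ Icc 1 M.H, ∀ s, s ≠ st k h →
    (uref (k + 1) h s ↔ uref k h s)
  kvis_spec : ∀ h ∈ Icc 1 M.H, ∀ s a n, 1 ≤ n → n ≤ N K h s a →
    kvis n h s a ∈ Icc 1 K ∧ N (kvis n h s a) h s a = n ∧
      st (kvis n h s a) h = s ∧ ac (kvis n h s a) h = a

/-!
The estimates of the algorithm are weighted averages over past visits, with weights of order `H / n`
after `n` visits. Freedman's exponential supermartingale, applied to finitely many tilts of each
average, shows that off an event of probability at most `δ` all these averages are as close to their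
conditional means as the exploration bonuses allow; for the reference-advantage estimate the true
variance is first replaced by its empirical counterpart, and the running means of the reference
value overestimate it because it decreases over time. On this event induction on the episodes gives
`VLCB ≤ V⋆ ≤ V`. A reference value that is still being updated equals `V`; it is frozen only once
`V ≤ VLCB + 1`. As `VLCB` increases and `V` decreases, afterwards
`V ≤ VR ≤ VLCB + 1 ≤ V⋆ + 1 ≤ V + 1`, so the two values differ by at most `1`.
-/

/-! ## Finite distributions -/

section FiniteDistributions

variable {S : Type*} [Fintype S] {p f g : S → ℝ}

/-- Variance of a function under a distribution `p` on a finite type; distributions are points of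
the standard simplex and expectations are dot products `p ⬝ᵥ f`. -/
def distVar (p f : S → ℝ) : ℝ := p ⬝ᵥ (f ^ 2) - (p ⬝ᵥ f) ^ 2

lemma dotProduct_mono_of_mem_stdSimplex (hp : p ∈ stdSimplex ℝ S) (hfg : f ≤ g) :
    p ⬝ᵥ f ≤ p ⬝ᵥ g :=
  sum_le_sum fun s _ => mul_le_mul_of_nonneg_left (hfg s) (hp.1 s)

lemma dotProduct_const_of_mem_stdSimplex (hp : p ∈ stdSimplex ℝ S) (c : ℝ) :
    (p ⬝ᵥ fun _ => c) = c := by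
  simp only [dotProduct, ← sum_mul, hp.2, one_mul]

lemma dotProduct_nonneg_of_mem_stdSimplex (hp : p ∈ stdSimplex ℝ S) (hf : ∀ s, 0 ≤ f s) :
    0 ≤ p ⬝ᵥ f :=
  sum_nonneg fun s _ => mul_nonneg (hp.1 s) (hf s)

lemma dotProduct_le_of_mem_stdSimplex {c : ℝ} (hp : p ∈ stdSimplex ℝ S) (hf : ∀ s, f s ≤ c) :
    p ⬝ᵥ f ≤ c :=
  (dotProduct_mono_of_mem_stdSimplex hp hf).trans_eq (dotProduct_const_of_mem_stdSimplex hp c)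

lemma abs_dotProduct_le_of_mem_stdSimplex {b : ℝ} (hp : p ∈ stdSimplex ℝ S)
    (hf : ∀ s, |f s| ≤ b) : |p ⬝ᵥ f| ≤ b :=
  calc |p ⬝ᵥ f| ≤ ∑ s, |p s * f s| := abs_sum_le_sum_abs _ _
    _ = p ⬝ᵥ fun s => |f s| := by simp only [dotProduct, abs_mul, abs_of_nonneg (hp.1 _)]
    _ ≤ b := dotProduct_le_of_mem_stdSimplex hp hf

lemma sq_dotProduct_le_of_mem_stdSimplex (hp : p ∈ stdSimplex ℝ S) :
    (p ⬝ᵥ f) ^ 2 ≤ p ⬝ᵥ (f ^ 2) := by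
  simpa [dotProduct] using even_two.convexOn_pow.map_sum_le (t := univ) (w := p) (p := f)
    (fun s _ => hp.1 s) hp.2 fun s _ => Set.mem_univ (f s)

lemma distVar_nonneg (hp : p ∈ stdSimplex ℝ S) : 0 ≤ distVar p f :=
  sub_nonneg.2 (sq_dotProduct_le_of_mem_stdSimplex hp)

lemma distVar_le_sq {b : ℝ} (hp : p ∈ stdSimplex ℝ S) (hf : ∀ s, |f s| ≤ b) :
    distVar p f ≤ b ^ 2 :=
  (sub_le_self _ (sq_nonneg _)).trans
    (dotProduct_le_of_mem_stdSimplex hp fun s => sq_le_sq' (abs_le.1 (hf s)).1 (abs_le.1 (hf s)).2)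

lemma distVar_smul (p f : S → ℝ) (c : ℝ) : distVar p (c • f) = c ^ 2 * distVar p f := by
  rw [distVar, distVar, smul_pow, dotProduct_smul, dotProduct_smul, smul_eq_mul, smul_eq_mul]
  ring

/-- Centring `f` and subtracting its variance: the exponential of this quantity has mean at most
one under `p`, so it is the natural increment of Freedman's exponential supermartingale. -/
def freedmanIncrement (p f : S → ℝ) (s : S) : ℝ := f s - p ⬝ᵥ f - distVar p f

lemma freedmanIncrement_zero (p : S → ℝ) (s : S) : freedmanIncrement p 0 s = 0 := by
  simp [freedmanIncrement, distVar]

lemma dotProduct_exp_freedmanIncrement_le_one (hp : p ∈ stdSimplex ℝ S)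
    (hf : ∀ s, |f s| ≤ 1 / 2) : (p ⬝ᵥ fun s => Real.exp (freedmanIncrement p f s)) ≤ 1 := by
  have hmean := abs_dotProduct_le_of_mem_stdSimplex hp hf
  have exp_le (s : S) : Real.exp (f s - p ⬝ᵥ f) ≤ 1 + (f s - p ⬝ᵥ f) + (f s - p ⬝ᵥ f) ^ 2 := by
    have hdev : |f s - p ⬝ᵥ f| ≤ 1 := (abs_sub _ _).trans (by linarith [hf s])
    linarith [(abs_le.1 (Real.abs_exp_sub_one_sub_id_le hdev)).2]
  have quadratic : (p ⬝ᵥ fun s => 1 + (f s - p ⬝ᵥ f) + (f s - p ⬝ᵥ f) ^ 2) = 1 + distVar p f := by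
    set m := p ⬝ᵥ f with hm
    have expand : (fun s => 1 + (f s - m) + (f s - m) ^ 2)
        = (fun _ => 1 - m + m ^ 2) + (1 - 2 * m) • f + f ^ 2 := by
      ext s
      simp only [Pi.add_apply, Pi.smul_apply, Pi.pow_apply, smul_eq_mul]
      ring
    rw [expand, dotProduct_add, dotProduct_add, dotProduct_const_of_mem_stdSimplex hp,
      dotProduct_smul, ← hm, distVar, ← hm, smul_eq_mul]
    ring
  calc (p ⬝ᵥ fun s => Real.exp (freedmanIncrement p f s))
      = (p ⬝ᵥ fun s => Real.exp (f s - p ⬝ᵥ f)) * Real.exp (-distVar p f) := by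
        simp only [freedmanIncrement, dotProduct, sub_eq_add_neg, Real.exp_add, sum_mul, mul_assoc]
    _ ≤ (1 + distVar p f) * Real.exp (-distVar p f) := by
        gcongr
        exact (dotProduct_mono_of_mem_stdSimplex hp exp_le).trans_eq quadratic
    _ ≤ Real.exp (distVar p f) * Real.exp (-distVar p f) := by
        gcongr
        linarith [Real.add_one_le_exp (distVar p f)]
    _ = 1 := by rw [← Real.exp_add, add_neg_cancel, Real.exp_zero]

lemma freedmanIncrement_le_one (hp : p ∈ stdSimplex ℝ S) (hf : ∀ s, |f s| ≤ 1 / 2) (s : S) :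
    freedmanIncrement p f s ≤ 1 := by
  rw [freedmanIncrement]
  linarith [abs_le.1 (hf s), abs_le.1 (abs_dotProduct_le_of_mem_stdSimplex hp hf),
    distVar_nonneg (f := f) hp]

lemma measurable_dotProduct {Ω : Type*} {_ : MeasurableSpace Ω} {p f : Ω → S → ℝ}
    (hp : Measurable p) (hf : Measurable f) : Measurable fun ω => p ω ⬝ᵥ f ω :=
  Finset.measurable_fun_sum _ fun s _ =>
    ((measurable_pi_apply s).comp hp).mul ((measurable_pi_apply s).comp hf)

lemma measurable_freedmanIncrement {Ω : Type*} {_ : MeasurableSpace Ω} {p f : Ω → S → ℝ}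
    (hp : Measurable p) (hf : Measurable f) :
    Measurable fun ω => freedmanIncrement (p ω) (f ω) := by
  have hf_sq : Measurable fun ω => f ω ^ 2 :=
    measurable_pi_lambda _ fun s => ((measurable_pi_apply s).comp hf).pow_const 2
  exact measurable_pi_lambda _ fun s => (((measurable_pi_apply s).comp hf).sub
    (measurable_dotProduct hp hf)).sub
      ((measurable_dotProduct hp hf_sq).sub ((measurable_dotProduct hp hf).pow_const 2))

end FiniteDistributions

lemma MDP.P_mem_stdSimplex {S A : Type} [Fintype S] [Fintype A] (M : MDP S A) (h : ℕ) (s : S)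
    (a : A) : M.P h s a ∈ stdSimplex ℝ S :=
  ⟨M.P_nonneg h s a, M.P_sum_one h s a⟩

/-! ## Freedman's inequality -/

section Freedman

lemma measurable_eval_of_countable {Ω S : Type*} [Countable S] [MeasurableSpace S]
    [MeasurableSingletonClass S] {_ : MeasurableSpace Ω} {X : Ω → S} {F : Ω → S → ℝ}
    (hX : Measurable X) (hF : Measurable F) : Measurable fun ω => F ω (X ω) :=
  (measurable_from_prod_countable_left fun s => measurable_pi_apply s :
    Measurable fun q : (S → ℝ) × S => q.1 q.2).comp (hF.prodMk hX)

lemma measurable_exp_mul_exp {Ω S : Type*} {_ : MeasurableSpace Ω} {L : Ω → ℝ} {F : Ω → S → ℝ}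
    (hL : Measurable L) (hF : Measurable F) :
    Measurable fun ω s => Real.exp (L ω) * Real.exp (F ω s) :=
  measurable_pi_lambda _ fun s => hL.exp.mul ((measurable_pi_apply s).comp hF).exp

variable {Ω S : Type*} [Fintype S] {m0 : MeasurableSpace Ω}

/-- The logarithm of Freedman's exponential supermartingale, for samples `X`, laws `p` and
test functions `g`. -/
def logSupermart (X : ℕ → Ω → S) (p g : ℕ → Ω → S → ℝ) (n : ℕ) (ω : Ω) : ℝ :=
  ∑ i ∈ Icc 1 n, freedmanIncrement (p i ω) (g i ω) (X i ω)

lemma exp_logSupermart_succ (X : ℕ → Ω → S) (p g : ℕ → Ω → S → ℝ) (n : ℕ) (ω : Ω) :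
    Real.exp (logSupermart X p g (n + 1) ω) = Real.exp (logSupermart X p g n ω) *
      Real.exp (freedmanIncrement (p (n + 1) ω) (g (n + 1) ω) (X (n + 1) ω)) := by
  rw [logSupermart, sum_Icc_succ_top (by lia), Real.exp_add, logSupermart]

variable [DecidableEq S] [MeasurableSpace S]

/-- For `1 ≤ k ≤ K`, the sample `X k` is revealed at time `k + 1` and has conditional distribution
`p k` given the information available at time `k`. -/
structure IsSampledFrom (μ : Measure Ω) (𝓖 : Filtration ℕ m0) (K : ℕ) (X : ℕ → Ω → S)
    (p : ℕ → Ω → S → ℝ) : Prop where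
  measurable_sample : ∀ k ∈ Icc 1 K, Measurable[𝓖 (k + 1)] (X k)
  measurable_law : ∀ k ∈ Icc 1 K, Measurable[𝓖 k] (p k)
  law_mem : ∀ k ∈ Icc 1 K, ∀ ω, p k ω ∈ stdSimplex ℝ S
  condExp_indicator : ∀ k ∈ Icc 1 K, ∀ s,
    μ[fun ω => if X k ω = s then (1 : ℝ) else 0 | 𝓖 k] =ᵐ[μ] fun ω => p k ω s

variable [MeasurableSingletonClass S]

lemma condExp_comp_sample {μ : Measure Ω} [IsFiniteMeasure μ] {m : MeasurableSpace Ω} (hm : m ≤ m0)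
    {X : Ω → S} {p F : Ω → S → ℝ} (hX : Measurable[m0] X) (hF : Measurable[m] F) {C : ℝ}
    (hFC : ∀ ω s, |F ω s| ≤ C)
    (hp : ∀ s, μ[fun ω => if X ω = s then (1 : ℝ) else 0 | m] =ᵐ[μ] fun ω => p ω s) :
    μ[fun ω => F ω (X ω) | m] =ᵐ[μ] fun ω => p ω ⬝ᵥ F ω := by
  let atom (s : S) (ω : Ω) : ℝ := if X ω = s then 1 else 0
  have atom_meas (s : S) : Measurable[m0] (atom s) :=
    Measurable.ite (hX (measurableSet_singleton s)) measurable_const measurable_const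
  have atom_le (s : S) (ω : Ω) : |atom s ω| ≤ 1 := by
    simp only [atom]; split_ifs <;> simp
  have atom_int (s : S) : Integrable (atom s) μ :=
    .of_bound (atom_meas s).aestronglyMeasurable 1 (.of_forall (atom_le s))
  have F_meas (s : S) : Measurable[m] fun ω => F ω s := (measurable_pi_apply s).comp hF
  have prod_int (s : S) : Integrable ((fun ω => F ω s) * atom s) μ :=
    (atom_int s).bdd_mul ((F_meas s).mono hm le_rfl).aestronglyMeasurable
      (.of_forall fun ω => hFC ω s)
  have decomp : (fun ω => F ω (X ω)) = ∑ s, (fun ω => F ω s) * atom s := by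
    ext ω
    simp [atom]
  have pull (s : S) : μ[(fun ω => F ω s) * atom s | m] =ᵐ[μ] fun ω => F ω s * p ω s := by
    filter_upwards [condExp_mul_of_stronglyMeasurable_left (F_meas s).stronglyMeasurable
      (prod_int s) (atom_int s), hp s] with ω hpull hlaw
    rw [hpull, Pi.mul_apply, hlaw]
  rw [decomp]
  filter_upwards [condExp_finsetSum (fun s _ => prod_int s) m, ae_all_iff.2 pull] with ω hsum hpull
  rw [hsum, Finset.sum_apply, dotProduct]
  exact sum_congr rfl fun s _ => (hpull s).trans (mul_comm _ _)

namespace IsSampledFrom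

variable {μ : Measure Ω} {𝓖 : Filtration ℕ m0} {K : ℕ} {X : ℕ → Ω → S} {p g : ℕ → Ω → S → ℝ}

lemma measurable_logSupermart (hX : IsSampledFrom μ 𝓖 K X p)
    (hg : ∀ k ∈ Icc 1 K, Measurable[𝓖 k] (g k)) {n : ℕ} (hn : n ≤ K) :
    Measurable[𝓖 (n + 1)] (logSupermart X p g n) := by
  refine Finset.measurable_fun_sum _ fun k hk => ?_
  obtain ⟨hk1, hkn⟩ := mem_Icc.1 hk
  have hkK : k ∈ Icc 1 K := mem_Icc.2 ⟨hk1, hkn.trans hn⟩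
  have hinc := measurable_freedmanIncrement (hX.measurable_law k hkK) (hg k hkK)
  exact measurable_eval_of_countable
    ((hX.measurable_sample k hkK).mono (𝓖.mono (by lia)) le_rfl)
    (hinc.mono (𝓖.mono (by lia)) le_rfl)

omit [DecidableEq S] [MeasurableSpace S] [MeasurableSingletonClass S] in
lemma exp_logSupermart_le (hp : ∀ k ∈ Icc 1 K, ∀ ω, p k ω ∈ stdSimplex ℝ S)
    (hg_le : ∀ k ∈ Icc 1 K, ∀ ω s, |g k ω s| ≤ 1 / 2) {n : ℕ} (hn : n ≤ K) (ω : Ω) :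
    Real.exp (logSupermart X p g n ω) ≤ Real.exp n := by
  refine Real.exp_le_exp.2 ((sum_le_sum fun k hk => ?_).trans_eq (b := ∑ k ∈ Icc 1 n, 1) (by simp))
  have hkK : k ∈ Icc 1 K := Icc_subset_Icc_right hn hk
  exact freedmanIncrement_le_one (hp k hkK ω) (hg_le k hkK ω) _

lemma integrable_exp_logSupermart [IsFiniteMeasure μ] (hX : IsSampledFrom μ 𝓖 K X p)
    (hg : ∀ k ∈ Icc 1 K, Measurable[𝓖 k] (g k))
    (hg_le : ∀ k ∈ Icc 1 K, ∀ ω s, |g k ω s| ≤ 1 / 2) {n : ℕ} (hn : n ≤ K) :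
    Integrable (fun ω => Real.exp (logSupermart X p g n ω)) μ := by
  refine .of_bound (((hX.measurable_logSupermart hg hn).mono (𝓖.le _) le_rfl).exp
    |>.aestronglyMeasurable) (Real.exp n) (.of_forall fun ω => ?_)
  rw [Real.norm_of_nonneg (Real.exp_pos _).le]
  exact exp_logSupermart_le hX.law_mem hg_le hn ω

lemma integral_exp_logSupermart_le_one [IsProbabilityMeasure μ] (hX : IsSampledFrom μ 𝓖 K X p)
    (hg : ∀ k ∈ Icc 1 K, Measurable[𝓖 k] (g k))
    (hg_le : ∀ k ∈ Icc 1 K, ∀ ω s, |g k ω s| ≤ 1 / 2) {n : ℕ} (hn : n ≤ K) :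
    ∫ ω, Real.exp (logSupermart X p g n ω) ∂μ ≤ 1 := by
  induction n with
  | zero => simp [logSupermart]
  | succ n ih =>
    have hk : n + 1 ∈ Icc 1 K := mem_Icc.2 ⟨by lia, hn⟩
    let F (ω : Ω) (s : S) : ℝ := Real.exp (logSupermart X p g n ω) *
      Real.exp (freedmanIncrement (p (n + 1) ω) (g (n + 1) ω) s)
    have F_meas : Measurable[𝓖 (n + 1)] F := by
      exact measurable_exp_mul_exp (hX.measurable_logSupermart hg (by lia))
        (measurable_freedmanIncrement (hX.measurable_law _ hk) (hg _ hk))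
    have F_le (ω : Ω) (s : S) : |F ω s| ≤ Real.exp n * Real.exp 1 := by
      rw [abs_of_pos (by positivity)]
      exact mul_le_mul (exp_logSupermart_le hX.law_mem hg_le (by lia) ω)
        (Real.exp_le_exp.2 (freedmanIncrement_le_one (hX.law_mem _ hk ω) (hg_le _ hk ω) s))
        (Real.exp_pos _).le (Real.exp_pos _).le
    have X_meas := (hX.measurable_sample _ hk).mono (𝓖.le _) le_rfl
    have condExp_F := condExp_comp_sample (𝓖.le _) X_meas F_meas F_le (hX.condExp_indicator _ hk)
    have mean_F_le (ω : Ω) : p (n + 1) ω ⬝ᵥ F ω ≤ Real.exp (logSupermart X p g n ω) := by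
      rw [show F ω = Real.exp (logSupermart X p g n ω) • fun s => Real.exp (freedmanIncrement
        (p (n + 1) ω) (g (n + 1) ω) s) from rfl, dotProduct_smul, smul_eq_mul]
      exact mul_le_of_le_one_right (Real.exp_pos _).le
        (dotProduct_exp_freedmanIncrement_le_one (hX.law_mem _ hk ω) (hg_le _ hk ω))
    calc ∫ ω, Real.exp (logSupermart X p g (n + 1) ω) ∂μ
        = ∫ ω, F ω (X (n + 1) ω) ∂μ := by simp only [exp_logSupermart_succ, F]
      _ = ∫ ω, (μ[fun ω => F ω (X (n + 1) ω) | 𝓖 (n + 1)]) ω ∂μ := (integral_condExp (𝓖.le _)).symm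
      _ ≤ ∫ ω, Real.exp (logSupermart X p g n ω) ∂μ :=
        integral_mono_ae integrable_condExp (hX.integrable_exp_logSupermart hg hg_le (by lia))
          (condExp_F.mono fun ω hω => hω.trans_le (mean_F_le ω))
      _ ≤ 1 := ih (by lia)

theorem measure_le_logSupermart_le [IsProbabilityMeasure μ] (hX : IsSampledFrom μ 𝓖 K X p)
    (hg : ∀ k ∈ Icc 1 K, Measurable[𝓖 k] (g k))
    (hg_le : ∀ k ∈ Icc 1 K, ∀ ω s, |g k ω s| ≤ 1 / 2) (x : ℝ) :
    μ {ω | x ≤ logSupermart X p g K ω} ≤ ENNReal.ofReal (Real.exp (-x)) := by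
  have markov := mul_meas_ge_le_integral_of_nonneg
    (.of_forall fun ω => (Real.exp_pos (logSupermart X p g K ω)).le)
    (hX.integrable_exp_logSupermart hg hg_le le_rfl) (Real.exp x)
  simp only [Real.exp_le_exp] at markov
  rw [← ofReal_measureReal]
  refine ENNReal.ofReal_le_ofReal ?_
  rw [Real.exp_neg, ← one_div, le_div_iff₀' (Real.exp_pos x)]
  exact markov.trans (hX.integral_exp_logSupermart_le_one hg hg_le le_rfl)

end IsSampledFrom

end Freedman

/-! ## Averages along visits -/

section Averages

/-- The average `∑ n ∈ [1, N], w N n * y n` of the first `N` terms of `y`, as a linear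
functional of `y`. -/
def weightedAvg (w : ℕ → ℕ → ℝ) (N : ℕ) : (ℕ → ℝ) →ₗ[ℝ] ℝ :=
  ∑ n ∈ Icc 1 N, w N n • LinearMap.proj n

lemma weightedAvg_apply (w : ℕ → ℕ → ℝ) (N : ℕ) (y : ℕ → ℝ) :
    weightedAvg w N y = ∑ n ∈ Icc 1 N, w N n * y n := by
  simp [weightedAvg, LinearMap.sum_apply]

lemma weightedAvg_congr (w : ℕ → ℕ → ℝ) {N : ℕ} {y z : ℕ → ℝ} (h : ∀ n ∈ Icc 1 N, y n = z n) :
    weightedAvg w N y = weightedAvg w N z := by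
  simp only [weightedAvg_apply]
  exact sum_congr rfl fun n hn => by rw [h n hn]

/-- Weights turning the first `N` terms of a sequence into a convex combination in which no single
term has weight more than `c / N`. -/
structure IsAveraging (w : ℕ → ℕ → ℝ) (c : ℝ) : Prop where
  nonneg : ∀ N n, 0 ≤ w N n
  eq_zero_of_lt : ∀ {N n}, N < n → w N n = 0
  sum_eq_one : ∀ {N}, 1 ≤ N → ∑ n ∈ Icc 1 N, w N n = 1
  le_div : ∀ N n, 1 ≤ N → w N n ≤ c / N

namespace IsAveraging

variable {w : ℕ → ℕ → ℝ} {c : ℝ} {N : ℕ} {y z : ℕ → ℝ}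

lemma mono (hw : IsAveraging w c) {c' : ℝ} (hc : c ≤ c') : IsAveraging w c' where
  nonneg := hw.nonneg
  eq_zero_of_lt := hw.eq_zero_of_lt
  sum_eq_one := hw.sum_eq_one
  le_div N n hN := (hw.le_div N n hN).trans (by gcongr)

lemma weightedAvg_const (hw : IsAveraging w c) (hN : 1 ≤ N) (b : ℝ) :
    weightedAvg w N (fun _ => b) = b := by
  rw [weightedAvg_apply, ← sum_mul, hw.sum_eq_one hN, one_mul]

lemma weightedAvg_mono (hw : IsAveraging w c) (h : ∀ n ∈ Icc 1 N, y n ≤ z n) :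
    weightedAvg w N y ≤ weightedAvg w N z := by
  simp only [weightedAvg_apply]
  exact sum_le_sum fun n hn => mul_le_mul_of_nonneg_left (h n hn) (hw.nonneg N n)

lemma weightedAvg_nonneg (hw : IsAveraging w c) (h : ∀ n ∈ Icc 1 N, 0 ≤ y n) :
    0 ≤ weightedAvg w N y := by
  rw [weightedAvg_apply]
  exact sum_nonneg fun n hn => mul_nonneg (hw.nonneg N n) (h n hn)

lemma weightedAvg_le (hw : IsAveraging w c) (hN : 1 ≤ N) {b : ℝ}
    (h : ∀ n ∈ Icc 1 N, y n ≤ b) : weightedAvg w N y ≤ b :=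
  (hw.weightedAvg_mono h).trans_eq (hw.weightedAvg_const hN b)

lemma le_weightedAvg (hw : IsAveraging w c) (hN : 1 ≤ N) {b : ℝ}
    (h : ∀ n ∈ Icc 1 N, b ≤ y n) : b ≤ weightedAvg w N y :=
  (hw.weightedAvg_const hN b).ge.trans (hw.weightedAvg_mono h)

lemma sq_weightedAvg_le (hw : IsAveraging w c) (hN : 1 ≤ N) :
    weightedAvg w N y ^ 2 ≤ weightedAvg w N (y ^ 2) := by
  simpa [weightedAvg_apply] using
    even_two.convexOn_pow.map_sum_le (t := Icc 1 N) (w := w N) (p := y)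
    (fun n _ => hw.nonneg N n) (hw.sum_eq_one hN) fun n _ => Set.mem_univ (y n)

end IsAveraging

/-- The equal weights `1 / N` of the first `N` visits. -/
noncomputable def uniformWeight (N n : ℕ) : ℝ := if n ≤ N then 1 / (N : ℝ) else 0

lemma isAveraging_uniformWeight : IsAveraging uniformWeight 1 where
  nonneg N n := by rw [uniformWeight]; positivity
  eq_zero_of_lt h := if_neg h.not_ge
  sum_eq_one {N} hN := by
    have hN0 : (N : ℝ) ≠ 0 := by positivity
    rw [sum_congr rfl fun n hn => show uniformWeight N n = 1 / N from if_pos (mem_Icc.1 hn).2]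
    simp [hN0]
  le_div N n _ := by
    rw [uniformWeight]
    split_ifs
    · exact le_rfl
    · positivity

lemma weightedAvg_uniformWeight_succ (N : ℕ) (y : ℕ → ℝ) :
    weightedAvg uniformWeight (N + 1) y
      = (1 - 1 / ((N + 1 : ℕ) : ℝ)) * weightedAvg uniformWeight N y
        + 1 / ((N + 1 : ℕ) : ℝ) * y (N + 1) := by
  have average_eq (m : ℕ) :
      weightedAvg uniformWeight m y = 1 / (m : ℝ) * ∑ n ∈ Icc 1 m, y n := by
    rw [weightedAvg_apply, mul_sum]
    exact sum_congr rfl fun n hn => by rw [uniformWeight, if_pos (mem_Icc.1 hn).2]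
  rw [average_eq, average_eq, sum_Icc_succ_top (by lia), mul_add, ← mul_assoc]
  rcases Nat.eq_zero_or_pos N with rfl | hN
  · simp
  · push_cast
    field_simp
    ring

lemma lr_nonneg (H n : ℕ) : 0 ≤ lr H n := by
  rw [lr]; positivity

lemma lr_one (H : ℕ) : lr H 1 = 1 := by
  rw [lr, Nat.cast_one]
  exact div_self (by positivity)

lemma one_sub_lr_succ (H N : ℕ) : 1 - lr H (N + 1) = (N : ℝ) / (H + (N + 1)) := by
  rw [lr]
  push_cast
  field_simp
  ring

lemma one_sub_lr_succ_nonneg (H N : ℕ) : 0 ≤ 1 - lr H (N + 1) := by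
  rw [one_sub_lr_succ]; positivity

/-- The weights `η_n^N` with which Q-learning averages the first `N` visits. -/
noncomputable def lrWeight (H N n : ℕ) : ℝ := lrProd H n N

lemma lrWeight_self (H N : ℕ) : lrWeight H (N + 1) (N + 1) = lr H (N + 1) := by
  simp [lrWeight, lrProd]

lemma lrWeight_succ (H : ℕ) {N n : ℕ} (h : n ≤ N) :
    lrWeight H (N + 1) n = (1 - lr H (N + 1)) * lrWeight H N n := by
  rw [lrWeight, lrWeight, lrProd, lrProd, if_neg (by lia : ¬N + 1 < n),
    if_neg h.not_gt, prod_Icc_succ_top (by lia)]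
  ring

lemma lrWeight_of_lt (H : ℕ) {N n : ℕ} (h : N < n) : lrWeight H N n = 0 :=
  if_pos h

lemma weightedAvg_lrWeight_succ (H N : ℕ) (y : ℕ → ℝ) :
    weightedAvg (lrWeight H) (N + 1) y
      = (1 - lr H (N + 1)) * weightedAvg (lrWeight H) N y + lr H (N + 1) * y (N + 1) := by
  rw [weightedAvg_apply, weightedAvg_apply, sum_Icc_succ_top (by lia), lrWeight_self, mul_sum]
  congr 1
  exact sum_congr rfl fun n hn => by rw [lrWeight_succ H (mem_Icc.1 hn).2, mul_assoc]

lemma lrWeight_nonneg (H N n : ℕ) : 0 ≤ lrWeight H N n := by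
  rw [lrWeight, lrProd]
  have hlr := lr_nonneg H n
  have hprod : 0 ≤ ∏ i ∈ Icc (n + 1) N, (1 - lr H i) := prod_nonneg fun i hi => by
    obtain ⟨j, rfl⟩ := Nat.exists_eq_add_of_lt (Nat.lt_of_lt_of_le n.succ_pos (mem_Icc.1 hi).1)
    simpa using one_sub_lr_succ_nonneg H j
  positivity

lemma lrWeight_le {H : ℕ} (hH : 1 ≤ H) (N n : ℕ) (hN : 1 ≤ N) : lrWeight H N n ≤ 2 * H / N := by
  have hH' : (1 : ℝ) ≤ H := by exact_mod_cast hH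
  induction N, hN using Nat.le_induction with
  | base =>
    rcases n with _ | _ | n
    · simp [lrWeight, lrProd, lr_one]
    · rw [lrWeight_self, lr_one, Nat.cast_one]
      linarith
    · rw [lrWeight_of_lt H (by lia)]
      positivity
  | succ N hN ih =>
    rcases lt_trichotomy n (N + 1) with hn | rfl | hn
    · rw [lrWeight_succ H (by lia), one_sub_lr_succ]
      calc (N : ℝ) / (H + (N + 1)) * lrWeight H N n
          ≤ (N : ℝ) / (H + (N + 1)) * (2 * H / N) := by gcongr
        _ = 2 * H / (H + (N + 1)) := by field_simp
        _ ≤ 2 * H / ((N + 1 : ℕ) : ℝ) := by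
          push_cast
          exact div_le_div_of_nonneg_left (by positivity) (by positivity) (by linarith)
    · rw [lrWeight_self, lr]
      gcongr
      · linarith
      · linarith
    · rw [lrWeight_of_lt H hn]
      positivity

lemma isAveraging_lrWeight {H : ℕ} (hH : 1 ≤ H) : IsAveraging (lrWeight H) (2 * H) where
  nonneg := lrWeight_nonneg H
  eq_zero_of_lt := lrWeight_of_lt H
  sum_eq_one {N} hN := by
    induction N, hN using Nat.le_induction with
    | base => simpa [lr_one] using lrWeight_self H 0
    | succ N hN ih =>
      rw [sum_Icc_succ_top (by lia), lrWeight_self,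
        sum_congr rfl fun n hn => lrWeight_succ H (mem_Icc.1 hn).2, ← mul_sum, ih]
      ring
  le_div := lrWeight_le hH

/-- The weights obtained by averaging with weights `η_m^N` the running means over the first `m`
visits. -/
noncomputable def lrMeanWeight (H N n : ℕ) : ℝ :=
  weightedAvg (lrWeight H) N fun m => uniformWeight m n

lemma weightedAvg_lrMeanWeight (H N : ℕ) (y : ℕ → ℝ) :
    weightedAvg (lrMeanWeight H) N y
      = weightedAvg (lrWeight H) N fun m => weightedAvg uniformWeight m y := by
  have extend (m : ℕ) (hm : m ∈ Icc 1 N) :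
      weightedAvg uniformWeight m y = ∑ n ∈ Icc 1 N, uniformWeight m n * y n := by
    rw [weightedAvg_apply]
    refine sum_subset (Icc_subset_Icc_right (mem_Icc.1 hm).2) fun n hn hnm => ?_
    rw [isAveraging_uniformWeight.eq_zero_of_lt (by simp_all), zero_mul]
  rw [weightedAvg_congr _ extend]
  simp only [weightedAvg_apply, lrMeanWeight, sum_mul, mul_sum]
  rw [sum_comm]
  simp only [mul_assoc]

lemma lrMeanWeight_le {H : ℕ} (hH : 1 ≤ H) (N n : ℕ) (hN : 1 ≤ N) :
    lrMeanWeight H N n ≤ 2 / N := by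
  have hH' : (1 : ℝ) ≤ H := by exact_mod_cast hH
  have uniform_le (m : ℕ) (hm : 1 ≤ m) : uniformWeight m n ≤ 1 / m :=
    isAveraging_uniformWeight.le_div m n hm
  induction N, hN using Nat.le_induction with
  | base =>
    rw [lrMeanWeight, weightedAvg_lrWeight_succ, lr_one, sub_self, zero_mul, zero_add, one_mul]
    exact (uniform_le 1 le_rfl).trans (by norm_num)
  | succ N hN ih =>
    rw [lrMeanWeight, weightedAvg_lrWeight_succ, ← lrMeanWeight]
    calc (1 - lr H (N + 1)) * lrMeanWeight H N n + lr H (N + 1) * uniformWeight (N + 1) n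
        ≤ (1 - lr H (N + 1)) * (2 / N) + lr H (N + 1) * (1 / (N + 1 : ℕ)) := by
          have := one_sub_lr_succ_nonneg H N
          have := lr_nonneg H (N + 1)
          have := uniform_le (N + 1) (by lia)
          gcongr
      _ = 2 / (H + (N + 1)) + (H + 1) / (H + (N + 1)) * (1 / (N + 1 : ℕ)) := by
          rw [one_sub_lr_succ, lr]
          push_cast
          field_simp
      _ ≤ 2 / (N + 1 : ℕ) := by
          push_cast
          rw [div_mul_div_comm, div_add_div _ _ (by positivity) (by positivity),
            div_le_div_iff₀ (by positivity) (by positivity)]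
          have : 0 ≤ ((H : ℝ) - 1) * ((H + (N + 1)) * (N + 1)) :=
            mul_nonneg (by linarith) (by positivity)
          nlinarith

lemma isAveraging_lrMeanWeight {H : ℕ} (hH : 1 ≤ H) : IsAveraging (lrMeanWeight H) 2 where
  nonneg N n := (isAveraging_lrWeight hH).weightedAvg_nonneg fun m _ =>
    isAveraging_uniformWeight.nonneg m n
  eq_zero_of_lt {N n} h := by
    rw [lrMeanWeight, weightedAvg_congr (z := 0) _ fun m hm =>
      isAveraging_uniformWeight.eq_zero_of_lt ((mem_Icc.1 hm).2.trans_lt h), map_zero]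
  sum_eq_one {N} hN := by
    have hone := weightedAvg_lrMeanWeight H N fun _ => 1
    rw [weightedAvg_congr _ fun m hm =>
        isAveraging_uniformWeight.weightedAvg_const (mem_Icc.1 hm).1 1,
      (isAveraging_lrWeight hH).weightedAvg_const hN, weightedAvg_apply] at hone
    simpa only [mul_one] using hone
  le_div := lrMeanWeight_le hH

lemma weightedAvg_lrWeight_le_weightedAvg_lrMeanWeight {H N : ℕ} (hH : 1 ≤ H) {y : ℕ → ℝ}
    (hy : ∀ i j, 1 ≤ i → i ≤ j → j ≤ N → y j ≤ y i) :
    weightedAvg (lrWeight H) N y ≤ weightedAvg (lrMeanWeight H) N y := by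
  rw [weightedAvg_lrMeanWeight]
  refine (isAveraging_lrWeight hH).weightedAvg_mono fun m hm => ?_
  obtain ⟨hm1, hmN⟩ := mem_Icc.1 hm
  exact isAveraging_uniformWeight.le_weightedAvg hm1 fun n hn =>
    hy n m (mem_Icc.1 hn).1 (mem_Icc.1 hn).2 hmN

end Averages

/-! ## Deviation of averages of samples -/

section Deviation

lemma exists_nat_mem_Icc_and_le_and_le_add_one {N : ℕ} (hN : 1 ≤ N) {y : ℝ} (hy0 : 0 ≤ y)
    (hyN : y ≤ N) : ∃ j ∈ Icc 1 N, y ≤ (j : ℝ) ∧ (j : ℝ) ≤ y + 1 := by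
  refine ⟨max 1 ⌈y⌉₊, mem_Icc.2 ⟨le_max_left _ _, max_le hN (Nat.ceil_le.2 hyN)⟩,
    (Nat.le_ceil y).trans (by exact_mod_cast le_max_right _ _), ?_⟩
  push_cast
  exact max_le (by linarith) (Nat.ceil_lt_add_one hy0).le

/-- Minimising `A / (2 b j) + 2 w b x j` over a real `j` gives `2 √(w x A)`; rounding the minimiser
up to an integer costs the additional `2 w b x`. -/
lemma le_sqrt_of_forall_nat_tilt {D A w b x : ℝ} {N : ℕ} (hN : 1 ≤ N) (hw : 0 < w) (hb : 0 < b)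
    (hx : 1 / 4 ≤ x) (hA : 0 ≤ A) (hAN : A ≤ N * (w * b ^ 2))
    (hD : ∀ j ∈ Icc 1 N, D ≤ A / (2 * b * j) + 2 * w * b * j * x) :
    D ≤ 2 * √(w * x * A) + 2 * w * b * x := by
  have : 0 < x := by linarith
  set q := √(w * x * A)
  have hq0 : 0 ≤ q := Real.sqrt_nonneg _
  have hqq : q ^ 2 = w * x * A := Real.sq_sqrt (by positivity)
  have hN1 : (1 : ℝ) ≤ N := by exact_mod_cast hN
  have minimiser_le : q / (2 * w * b * x) ≤ N := by
    rw [div_le_iff₀ (by positivity)]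
    refine le_of_sq_le_sq ?_ (by positivity)
    calc q ^ 2 ≤ w * x * (N * (w * b ^ 2)) := by rw [hqq]; gcongr
      _ = (w * b) ^ 2 * x * N * 1 := by ring
      _ ≤ (w * b) ^ 2 * x * N * (4 * x * N) := by
        gcongr
        nlinarith
      _ = (N * (2 * w * b * x)) ^ 2 := by ring
  obtain ⟨j, hj, le_j, j_le⟩ := exists_nat_mem_Icc_and_le_and_le_add_one hN
    (show 0 ≤ q / (2 * w * b * x) by positivity) minimiser_le
  have hj0 : (0 : ℝ) < j := by exact_mod_cast (mem_Icc.1 hj).1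
  rw [div_le_iff₀ (by positivity)] at le_j
  have variance_term : A / (2 * b * j) ≤ q := by
    rw [div_le_iff₀ (by positivity)]
    refine le_of_mul_le_mul_left ?_ (show 0 < w * x by positivity)
    calc w * x * A = q * q := by rw [← hqq, sq]
      _ ≤ q * (j * (2 * w * b * x)) := by gcongr
      _ = w * x * (q * (2 * b * j)) := by ring
  have range_term : 2 * w * b * j * x ≤ q + 2 * w * b * x :=
    calc 2 * w * b * j * x = 2 * w * b * x * j := by ring
      _ ≤ 2 * w * b * x * (q / (2 * w * b * x) + 1) := by gcongr
      _ = q + 2 * w * b * x := by field_simp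
  linarith [hD j hj]

variable {S : Type*} [Fintype S]

/-- The conclusion of Freedman's inequality, at confidence level `x`, for the average with weights
`w N ≤ c / N` of functions `F n` bounded by `b`, sampled at points `X n` of common law `p`. -/
def HasFreedmanDeviation (w : ℕ → ℕ → ℝ) (c b x : ℝ) (p : S → ℝ) (F : ℕ → S → ℝ) (X : ℕ → S)
    (N : ℕ) : Prop :=
  |weightedAvg w N fun n => F n (X n) - p ⬝ᵥ F n| ≤
    2 * √(c / N * x * weightedAvg w N fun n => distVar p (F n)) + 2 * (c / N) * b * x

lemma freedmanIncrement_smul (p f : S → ℝ) (a : ℝ) (s : S) :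
    freedmanIncrement p (a • f) s = a * (f s - p ⬝ᵥ f) - a ^ 2 * distVar p f := by
  rw [freedmanIncrement, distVar_smul, dotProduct_smul, Pi.smul_apply, smul_eq_mul, smul_eq_mul]
  ring

/-- The factor by which the `n`-th of `N` visits is multiplied in the exponential supermartingale
whose tail is optimised at grid point `j`, for functions bounded by `b`. -/
noncomputable def tilt (w : ℕ → ℕ → ℝ) (c b : ℝ) (N j n : ℕ) : ℝ :=
  1 / (2 * (c / N) * b * j) * w N n

variable {w w' : ℕ → ℕ → ℝ} {c b x : ℝ} {p : S → ℝ} {F : ℕ → S → ℝ} {X : ℕ → S} {N : ℕ}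

lemma IsAveraging.weightedAvg_distVar_nonneg (hw : IsAveraging w c) (hp : p ∈ stdSimplex ℝ S) :
    0 ≤ weightedAvg w N fun n => distVar p (F n) :=
  hw.weightedAvg_nonneg fun _ _ => distVar_nonneg hp

lemma IsAveraging.weightedAvg_distVar_le_sq (hw : IsAveraging w c) (hp : p ∈ stdSimplex ℝ S)
    (hF : ∀ n s, |F n s| ≤ b) (hN : 1 ≤ N) : (weightedAvg w N fun n => distVar p (F n)) ≤ b ^ 2 :=
  hw.weightedAvg_le hN fun n _ => distVar_le_sq hp (hF n)

lemma IsAveraging.abs_tilt_le (hw : IsAveraging w c) (hc : 0 < c) (hb : 0 < b) {j : ℕ}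
    (hN : 1 ≤ N) (hj : 1 ≤ j) (n : ℕ) : |tilt w c b N j n| * b ≤ 1 / 2 := by
  have hw0 := hw.nonneg N n
  have hj1 : (1 : ℝ) ≤ j := by exact_mod_cast hj
  rw [tilt, abs_of_nonneg (by positivity)]
  calc 1 / (2 * (c / N) * b * j) * w N n * b
      ≤ 1 / (2 * (c / N) * b * j) * (c / N) * b := by
        gcongr
        exact hw.le_div N n hN
    _ = 1 / (2 * j) := by field_simp
    _ ≤ 1 / 2 := one_div_le_one_div_of_le two_pos (by linarith)

lemma IsAveraging.weightedAvg_le_of_sum_freedmanIncrement_le (hw : IsAveraging w c) (hc : 0 < c)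
    (hb : 0 < b) (hp : p ∈ stdSimplex ℝ S) (hN : 1 ≤ N) {σ : ℝ} (hσ : σ ^ 2 = 1) {j : ℕ}
    (hj : 1 ≤ j)
    (h : ∑ n ∈ Icc 1 N, freedmanIncrement p ((σ * tilt w c b N j n) • F n) (X n) ≤ x) :
    σ * (weightedAvg w N fun n => F n (X n) - p ⬝ᵥ F n) ≤
      (weightedAvg w N fun n => distVar p (F n)) / (2 * b * j) + 2 * (c / N) * b * j * x := by
  set W := c / N
  have hW : 0 < W := by positivity
  set l := 1 / (2 * W * b * j) with hl
  have hl0 : 0 < l := by positivity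
  have split_sum : l * (σ * weightedAvg w N fun n => F n (X n) - p ⬝ᵥ F n)
      - l ^ 2 * (W * weightedAvg w N fun n => distVar p (F n))
      ≤ ∑ n ∈ Icc 1 N, freedmanIncrement p ((σ * tilt w c b N j n) • F n) (X n) := by
    simp only [weightedAvg_apply, mul_sum, ← sum_sub_distrib]
    refine sum_le_sum fun n _ => ?_
    have hwn := hw.nonneg N n
    have hvar := distVar_nonneg (f := F n) hp
    have sq_le : l ^ 2 * (w N n * (w N n * distVar p (F n)))
        ≤ l ^ 2 * (W * (w N n * distVar p (F n))) := by
      gcongr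
      exact hw.le_div N n hN
    rw [freedmanIncrement_smul, tilt, ← hl, mul_pow σ, hσ]
    linarith
  have scaled : l * (σ * weightedAvg w N fun n => F n (X n) - p ⬝ᵥ F n) ≤
      l * ((weightedAvg w N fun n => distVar p (F n)) / (2 * b * j) + 2 * W * b * j * x) :=
    calc _ ≤ l ^ 2 * (W * weightedAvg w N fun n => distVar p (F n)) + x := by linarith
      _ = _ := by rw [hl]; field_simp
  exact le_of_mul_le_mul_left scaled hl0

lemma IsAveraging.hasFreedmanDeviation_of_forall_tilt (hw : IsAveraging w c) (hc : 1 ≤ c)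
    (hb : 0 < b) (hp : p ∈ stdSimplex ℝ S) (hF : ∀ n s, |F n s| ≤ b) (hN : 1 ≤ N)
    (hx : 1 / 4 ≤ x)
    (h : ∀ σ : ℝ, σ = 1 ∨ σ = -1 → ∀ j ∈ Icc 1 N,
      ∑ n ∈ Icc 1 N, freedmanIncrement p ((σ * tilt w c b N j n) • F n) (X n) ≤ x) :
    HasFreedmanDeviation w c b x p F X N := by
  have hN0 : (0 : ℝ) < N := by exact_mod_cast hN
  have variance_le : (weightedAvg w N fun n => distVar p (F n)) ≤ N * (c / N * b ^ 2) :=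
    (hw.weightedAvg_distVar_le_sq hp hF hN).trans <| by
      rw [← mul_assoc, mul_div_cancel₀ _ hN0.ne']
      exact le_mul_of_one_le_left (sq_nonneg b) hc
  have one_sided (σ : ℝ) (hσ : σ = 1 ∨ σ = -1) :=
    le_sqrt_of_forall_nat_tilt hN (show 0 < c / N by positivity) hb hx
      (hw.weightedAvg_distVar_nonneg hp) variance_le fun j hj =>
        hw.weightedAvg_le_of_sum_freedmanIncrement_le (by linarith) hb hp hN (sq_eq_one_iff.2 hσ)
          (mem_Icc.1 hj).1 (h σ hσ j hj)
  exact abs_le'.2 ⟨by simpa using one_sided 1 (.inl rfl), by simpa using one_sided (-1) (.inr rfl)⟩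

lemma IsAveraging.abs_weightedAvg_le (hw : IsAveraging w c) (hN : 1 ≤ N) {y : ℕ → ℝ}
    (hy : ∀ n ∈ Icc 1 N, |y n| ≤ b) : |weightedAvg w N y| ≤ b :=
  abs_le.2 ⟨hw.le_weightedAvg hN fun n hn => (abs_le.1 (hy n hn)).1,
    hw.weightedAvg_le hN fun n hn => (abs_le.1 (hy n hn)).2⟩

lemma IsAveraging.abs_weightedAvg_sub_dotProduct_le (hw : IsAveraging w c) (hN : 1 ≤ N)
    (hp : p ∈ stdSimplex ℝ S) (hF : ∀ n s, |F n s| ≤ b) :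
    |weightedAvg w N fun n => F n (X n) - p ⬝ᵥ F n| ≤ 2 * b :=
  hw.abs_weightedAvg_le hN fun n _ => (abs_sub _ _).trans <| by
    linarith [hF n (X n), abs_dotProduct_le_of_mem_stdSimplex hp (hF n)]

namespace HasFreedmanDeviation

lemma hoeffding (h : HasFreedmanDeviation w c b x p F X N) (hw : IsAveraging w c) (hc : 0 ≤ c)
    (hb : 0 ≤ b) (hx : 0 ≤ x) (hp : p ∈ stdSimplex ℝ S) (hF : ∀ n s, |F n s| ≤ b) (hN : 1 ≤ N) :
    |weightedAvg w N fun n => F n (X n) - p ⬝ᵥ F n| ≤ 4 * b * √(c / N * x) := by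
  set q := √(c / N * x)
  have hq0 : 0 ≤ q := Real.sqrt_nonneg _
  have hqq : q ^ 2 = c / N * x := Real.sq_sqrt (by positivity)
  rcases le_total q 1 with hq1 | hq1
  · have sqrt_le : √(c / N * x * weightedAvg w N fun n => distVar p (F n)) ≤ q * b := by
      refine Real.sqrt_le_iff.2 ⟨by positivity, ?_⟩
      rw [mul_pow, ← hqq]
      gcongr
      exact hw.weightedAvg_distVar_le_sq hp hF hN
    have range_le : q ^ 2 * b ≤ q * b := by
      rw [sq, mul_assoc]
      exact mul_le_of_le_one_left (by positivity) hq1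
    calc _ ≤ 2 * √(c / N * x * weightedAvg w N fun n => distVar p (F n))
            + 2 * (c / N) * b * x := h
      _ = 2 * √(c / N * x * weightedAvg w N fun n => distVar p (F n))
            + 2 * (q ^ 2 * b) := by rw [hqq]; ring
      _ ≤ 4 * b * q := by linarith
  · calc _ ≤ 2 * b := hw.abs_weightedAvg_sub_dotProduct_le hN hp hF
      _ ≤ 4 * b * q := by nlinarith

end HasFreedmanDeviation

/-- The variance of `y` under the weights `w N`, as estimated by the algorithm. -/
def weightedVar (w : ℕ → ℕ → ℝ) (N : ℕ) (y : ℕ → ℝ) : ℝ :=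
  weightedAvg w N (y ^ 2) - weightedAvg w N y ^ 2

lemma weightedVar_congr (w : ℕ → ℕ → ℝ) {y z : ℕ → ℝ} (h : ∀ n ∈ Icc 1 N, y n = z n) :
    weightedVar w N y = weightedVar w N z := by
  rw [weightedVar, weightedVar, weightedAvg_congr w h, weightedAvg_congr w (z := z ^ 2) fun n hn =>
    congrArg (· ^ 2) (h n hn)]

lemma sq_sub_sq_le_of_abs_le {y z e : ℝ} (hy : |y| ≤ b) (hz : |z| ≤ b) (hyz : |y - z| ≤ e) :
    y ^ 2 - z ^ 2 ≤ 2 * b * e :=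
  calc y ^ 2 - z ^ 2 = (y + z) * (y - z) := by ring
    _ ≤ |y + z| * |y - z| := (le_abs_self _).trans_eq (abs_mul _ _)
    _ ≤ 2 * b * e := by
      have hb : 0 ≤ b := (abs_nonneg y).trans hy
      gcongr
      exact (abs_add_le y z).trans (by linarith)

/-- The variance of the conditional means `p ⬝ᵥ F n` is dropped by Jensen's inequality. -/
lemma IsAveraging.weightedAvg_distVar_le_weightedVar_add (hw : IsAveraging w c) (hN : 1 ≤ N)
    (hp : p ∈ stdSimplex ℝ S) (hF : ∀ n s, |F n s| ≤ b) {q : ℝ}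
    (hmean : |weightedAvg w N fun n => F n (X n) - p ⬝ᵥ F n| ≤ 4 * b * q)
    (hsq : |weightedAvg w N fun n => (F n ^ 2) (X n) - p ⬝ᵥ (F n ^ 2)| ≤ 4 * b ^ 2 * q) :
    (weightedAvg w N fun n => distVar p (F n)) ≤
      weightedVar w N (fun n => F n (X n)) + 12 * b ^ 2 * q := by
  let Y (n : ℕ) : ℝ := F n (X n)
  let m (n : ℕ) : ℝ := p ⬝ᵥ F n
  let m₂ (n : ℕ) : ℝ := p ⬝ᵥ (F n ^ 2)
  have mean_dev : |weightedAvg w N Y - weightedAvg w N m| ≤ 4 * b * q := by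
    rw [← map_sub]; exact hmean
  have sq_dev : |weightedAvg w N (Y ^ 2) - weightedAvg w N m₂| ≤ 4 * b ^ 2 * q := by
    rw [← map_sub]; exact hsq
  have sq_mean_dev : weightedAvg w N Y ^ 2 - weightedAvg w N m ^ 2 ≤ 2 * b * (4 * b * q) :=
    sq_sub_sq_le_of_abs_le (hw.abs_weightedAvg_le hN fun n _ => hF n (X n))
      (hw.abs_weightedAvg_le hN fun n _ => abs_dotProduct_le_of_mem_stdSimplex hp (hF n)) mean_dev
  calc (weightedAvg w N fun n => distVar p (F n))
      = weightedAvg w N m₂ - weightedAvg w N (m ^ 2) := by rw [← map_sub]; rfl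
    _ ≤ weightedAvg w N m₂ - weightedAvg w N m ^ 2 := by gcongr; exact hw.sq_weightedAvg_le hN
    _ ≤ weightedVar w N Y + 12 * b ^ 2 * q := by
      rw [weightedVar]
      linarith [abs_le.1 sq_dev]

lemma sqrt_two_mul_add_le {E v b q : ℝ} (hb : 0 ≤ b) (hq : 0 ≤ q) (hv : v ≤ E + 12 * b ^ 2 * q) :
    √(2 * v) ≤ 3 / 2 * √E + 5 * b * √q := by
  have hE : E ≤ √E ^ 2 := by
    rw [Real.sq_sqrt']
    exact le_max_left _ _
  refine Real.sqrt_le_iff.2 ⟨by positivity, ?_⟩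
  have cross : 0 ≤ √E * b * √q := by positivity
  calc 2 * v ≤ 2 * (√E ^ 2 + 12 * b ^ 2 * √q ^ 2) := by
        rw [Real.sq_sqrt hq]; linarith
    _ ≤ (3 / 2 * √E + 5 * b * √q) ^ 2 := by
      nlinarith [sq_nonneg (√E), sq_nonneg (b * √q)]

namespace HasFreedmanDeviation

lemma empirical (h : HasFreedmanDeviation w c b x p F X N)
    (hmean : HasFreedmanDeviation w' c b x p F X N)
    (hsq : HasFreedmanDeviation w' c (b ^ 2) x p (fun n => F n ^ 2) X N)
    (hw : IsAveraging w c) (hw' : IsAveraging w' c) (hww' : ∀ n ∈ Icc 1 N, w N n ≤ 2 * w' N n)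
    (hc : 0 ≤ c) (hb : 0 ≤ b) (hx : 0 ≤ x) (hp : p ∈ stdSimplex ℝ S)
    (hF : ∀ n s, |F n s| ≤ b) (hN : 1 ≤ N) :
    |weightedAvg w N fun n => F n (X n) - p ⬝ᵥ F n| ≤
      3 * √(c / N * x) * √(weightedVar w' N fun n => F n (X n))
        + 13 * b * (√(c / N * x) * √(√(c / N * x))) := by
  set q := √(c / N * x)
  have hq0 : 0 ≤ q := Real.sqrt_nonneg _
  have hqq : c / N * x = q ^ 2 := (Real.sq_sqrt (by positivity)).symm
  set E := weightedVar w' N fun n => F n (X n)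
  rcases le_total q 1 with hq1 | hq1
  · have hF_sq (n : ℕ) (s : S) : |(F n ^ 2) s| ≤ b ^ 2 := by
      rw [Pi.pow_apply, abs_pow]
      exact pow_le_pow_left₀ (abs_nonneg _) (hF n s) 2
    have variance_le := hw'.weightedAvg_distVar_le_weightedVar_add hN hp hF
      (hmean.hoeffding hw' hc hb hx hp hF hN)
      (hsq.hoeffding hw' hc (sq_nonneg b) hx hp hF_sq hN)
    have avg_le : (weightedAvg w N fun n => distVar p (F n)) ≤
        2 * weightedAvg w' N fun n => distVar p (F n) := by
      simp only [weightedAvg_apply, mul_sum, ← mul_assoc]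
      exact sum_le_sum fun n hn => mul_le_mul_of_nonneg_right (hww' n hn) (distVar_nonneg hp)
    have q_le : q ≤ √q := Real.le_sqrt_of_sq_le (by nlinarith)
    calc _ ≤ 2 * √(q ^ 2 * weightedAvg w N fun n => distVar p (F n))
            + 2 * (q * q) * b := h.trans_eq (by rw [← sq, ← hqq]; ring)
      _ ≤ 2 * (q * (3 / 2 * √E + 5 * b * √q)) + 2 * (q * √q) * b := by
        rw [Real.sqrt_mul (sq_nonneg q), Real.sqrt_sq hq0]
        gcongr
        exact (Real.sqrt_le_sqrt avg_le).trans (sqrt_two_mul_add_le hb hq0 variance_le)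
      _ ≤ 3 * q * √E + 13 * b * (q * √q) := by
        have : 0 ≤ b * (q * √q) := by positivity
        linarith
  · have one_le : 1 ≤ q * √q := one_le_mul_of_one_le_of_one_le hq1 (Real.one_le_sqrt.2 hq1)
    have hE : 0 ≤ 3 * q * √E := by positivity
    calc _ ≤ 2 * b := hw.abs_weightedAvg_sub_dotProduct_le hN hp hF
      _ ≤ 13 * b * (q * √q) := by nlinarith
      _ ≤ 3 * q * √E + 13 * b * (q * √q) := le_add_of_nonneg_left hE

end HasFreedmanDeviation

end Deviation

/-! ## Visits and closed forms of the iterates -/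

namespace QLAlg

variable {S A : Type} [Fintype S] [Fintype A] [Nonempty S] [Nonempty A]
  [DecidableEq S] [DecidableEq A] {M : MDP S A} {K : ℕ} {cb δ : ℝ}

/-- Episode `k` visits the pair `(s, a)` at step `h`. -/
abbrev Visits (o : QLAlg M K cb δ) (h : ℕ) (s : S) (a : A) (k : ℕ) : Prop :=
  s = o.st k h ∧ a = o.ac k h

/-- The state observed right after the `n`-th visit of `(s, a)` at step `h`. -/
def nextState (o : QLAlg M K cb δ) (h : ℕ) (s : S) (a : A) (n : ℕ) : S :=
  o.st (o.kvis n h s a) (h + 1)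

/-- The step-`(h + 1)` value of an iterate `W` in the episode of the `n`-th visit of `(s, a)` at
step `h`. -/
def atVisit (o : QLAlg M K cb δ) (W : ℕ → ℕ → S → ℝ) (h : ℕ) (s : S) (a : A) (n : ℕ) : S → ℝ :=
  W (o.kvis n h s a) (h + 1)

variable (o : QLAlg M K cb δ) {h : ℕ} (hh : h ∈ Icc 1 M.H) (s : S) (a : A) {k : ℕ}

section Counting

include hh

lemma N_succ_of_visits {s : S} {a : A} (hk : k + 1 ≤ K) (hv : o.Visits h s a (k + 1)) :
    o.N (k + 1) h s a = o.N k h s a + 1 := by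
  simpa only [if_pos hv, Nat.add_sub_cancel] using o.N_upd (k + 1) (mem_Icc.2 ⟨by lia, hk⟩) h hh s a

lemma N_succ_of_not_visits {s : S} {a : A} (hk : k + 1 ≤ K) (hv : ¬o.Visits h s a (k + 1)) :
    o.N (k + 1) h s a = o.N k h s a := by
  simpa only [if_neg hv, Nat.add_sub_cancel, add_zero] using
    o.N_upd (k + 1) (mem_Icc.2 ⟨by lia, hk⟩) h hh s a

lemma N_mono {i j : ℕ} (hij : i ≤ j) (hj : j ≤ K) : o.N i h s a ≤ o.N j h s a := by
  induction j, hij using Nat.le_induction with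
  | base => rfl
  | succ j _ ih =>
    refine (ih (by lia)).trans ?_
    rw [o.N_upd (j + 1) (mem_Icc.2 ⟨by lia, hj⟩) h hh s a]
    exact Nat.le_add_right _ _

lemma N_le (hk : k ≤ K) : o.N k h s a ≤ k := by
  induction k with
  | zero => rw [o.N_init]
  | succ k ih =>
    have := ih (by lia)
    by_cases hv : o.Visits h s a (k + 1)
    · rw [o.N_succ_of_visits hh hk hv]; lia
    · rw [o.N_succ_of_not_visits hh hk hv]; lia

lemma N_lt_of_visits {i j : ℕ} (hij : i < j) (hj : j ≤ K) {s : S} {a : A}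
    (hv : o.Visits h s a j) : o.N i h s a < o.N j h s a := by
  obtain ⟨j, rfl⟩ := Nat.exists_eq_add_of_lt hij
  rw [o.N_succ_of_visits hh hj hv]
  exact Nat.lt_succ_of_le (o.N_mono hh s a (by lia) (by lia))

variable {s a} {n : ℕ}

lemma kvis_mem_Icc (hn : 1 ≤ n) (hnk : n ≤ o.N k h s a) (hk : k ≤ K) :
    o.kvis n h s a ∈ Icc 1 k := by
  have hle := hnk.trans (o.N_mono hh s a hk le_rfl)
  obtain ⟨hmem, hcount, hs, ha⟩ := o.kvis_spec h hh s a n hn hle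
  rw [mem_Icc] at hmem ⊢
  refine ⟨hmem.1, not_lt.1 fun hlt => ?_⟩
  exact (o.N_lt_of_visits hh hlt hmem.2 ⟨hs.symm, ha.symm⟩).not_ge (hcount.trans_le hnk)

lemma N_kvis (hn : 1 ≤ n) (hnk : n ≤ o.N k h s a) (hk : k ≤ K) :
    o.N (o.kvis n h s a) h s a = n :=
  (o.kvis_spec h hh s a n hn (hnk.trans (o.N_mono hh s a hk le_rfl))).2.1

lemma visits_kvis (hn : 1 ≤ n) (hnk : n ≤ o.N k h s a) (hk : k ≤ K) :
    o.Visits h s a (o.kvis n h s a) :=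
  have hspec := o.kvis_spec h hh s a n hn (hnk.trans (o.N_mono hh s a hk le_rfl))
  ⟨hspec.2.2.1.symm, hspec.2.2.2.symm⟩

lemma kvis_N (hk : k ∈ Icc 1 K) (hv : o.Visits h s a k) : o.kvis (o.N k h s a) h s a = k := by
  obtain ⟨hk1, hkK⟩ := mem_Icc.1 hk
  have hN : 1 ≤ o.N k h s a := by
    have := o.N_lt_of_visits hh hk1 hkK hv
    lia
  obtain ⟨_, hle⟩ := mem_Icc.1 (o.kvis_mem_Icc hh hN le_rfl hkK)
  refine hle.antisymm (not_lt.1 fun hlt => ?_)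
  exact (o.N_lt_of_visits hh hlt hkK hv).ne (o.N_kvis hh hN le_rfl hkK)

lemma kvis_mono {i j : ℕ} (hi : 1 ≤ i) (hij : i ≤ j) (hj : j ≤ o.N k h s a) (hk : k ≤ K) :
    o.kvis i h s a ≤ o.kvis j h s a := by
  refine not_lt.1 fun hlt => ?_
  have hmem := mem_Icc.1 (o.kvis_mem_Icc hh hi (hij.trans hj) hk)
  have hcount := o.N_lt_of_visits hh hlt (hmem.2.trans hk) (o.visits_kvis hh hi (hij.trans hj) hk)
  rw [o.N_kvis hh hi (hij.trans hj) hk, o.N_kvis hh (hi.trans hij) hj hk] at hcount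
  exact hcount.not_ge hij

lemma sum_visits_eq_sum_kvis (f : ℕ → ℝ) (hk : k ≤ K) :
    ∑ i ∈ Icc 1 k, (if o.Visits h s a i then f i else 0)
      = ∑ n ∈ Icc 1 (o.N k h s a), f (o.kvis n h s a) := by
  induction k with
  | zero => simp [o.N_init]
  | succ k ih =>
    rw [sum_Icc_succ_top (by lia), ih (by lia)]
    by_cases hv : o.Visits h s a (k + 1)
    · have hvis := o.kvis_N hh (mem_Icc.2 ⟨by lia, hk⟩) hv
      rw [o.N_succ_of_visits hh hk hv] at hvis ⊢
      rw [sum_Icc_succ_top (by lia), if_pos hv, hvis]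
    · rw [o.N_succ_of_not_visits hh hk hv, if_neg hv, add_zero]

end Counting

section ClosedForms

include hh

lemma eq_weightedAvg_of_update {w : ℕ → ℕ → ℝ} {α y z : ℕ → ℝ} (hα : α 1 = 1)
    (hw : ∀ N y, weightedAvg w (N + 1) y
      = (1 - α (N + 1)) * weightedAvg w N y + α (N + 1) * y (N + 1))
    (hz : ∀ k ∈ Icc 1 K, z (k + 1) = if o.Visits h s a k then
      (1 - α (o.N k h s a)) * z k + α (o.N k h s a) * y k else z k)
    (hk : k ≤ K) :
    z (k + 1) = (if o.N k h s a = 0 then z 1 else 0)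
      + weightedAvg w (o.N k h s a) fun n => y (o.kvis n h s a) := by
  induction k with
  | zero => simp [o.N_init, weightedAvg_apply]
  | succ k ih =>
    have hmem : k + 1 ∈ Icc 1 K := mem_Icc.2 ⟨by lia, hk⟩
    rw [hz _ hmem, ih (by lia)]
    by_cases hv : o.Visits h s a (k + 1)
    · have hvis := o.kvis_N hh hmem hv
      rw [o.N_succ_of_visits hh hk hv] at hvis ⊢
      rw [if_pos hv, hw, hvis, if_neg (Nat.succ_ne_zero _)]
      split_ifs with hN
      · rw [hN, hα]; ring
      · ring
    · rw [if_neg hv, o.N_succ_of_not_visits hh hk hv]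

lemma muRef_eq (hk : k ≤ K) :
    o.muRef (k + 1) h s a = weightedAvg uniformWeight (o.N k h s a) fun n =>
      o.atVisit o.VR h s a n (o.nextState h s a n) := by
  have hform := o.eq_weightedAvg_of_update hh s a (z := fun k => o.muRef k h s a)
    (y := fun k => o.VR k (h + 1) (o.st k (h + 1))) (α := fun n => 1 / (n : ℝ)) (by simp)
    weightedAvg_uniformWeight_succ (fun k hk => o.muRef_upd k hk h hh s a) hk
  rwa [(o.mom_init h s a).1, ite_self, zero_add] at hform

lemma sigRef_eq (hk : k ≤ K) :
    o.sigRef (k + 1) h s a = weightedAvg uniformWeight (o.N k h s a) fun n =>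
      o.atVisit o.VR h s a n (o.nextState h s a n) ^ 2 := by
  have hform := o.eq_weightedAvg_of_update hh s a (z := fun k => o.sigRef k h s a)
    (y := fun k => o.VR k (h + 1) (o.st k (h + 1)) ^ 2) (α := fun n => 1 / (n : ℝ)) (by simp)
    weightedAvg_uniformWeight_succ (fun k hk => o.sigRef_upd k hk h hh s a) hk
  rwa [(o.mom_init h s a).2.1, ite_self, zero_add] at hform

lemma eq_weightedAvg_lrWeight_of_update {y z : ℕ → ℝ}
    (hz : ∀ k ∈ Icc 1 K, z (k + 1) = if o.Visits h s a k then
      (1 - lr M.H (o.N k h s a)) * z k + lr M.H (o.N k h s a) * y k else z k)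
    (hk : k ≤ K) :
    z (k + 1) = (if o.N k h s a = 0 then z 1 else 0)
      + weightedAvg (lrWeight M.H) (o.N k h s a) fun n => y (o.kvis n h s a) :=
  o.eq_weightedAvg_of_update hh s a (lr_one M.H) (weightedAvg_lrWeight_succ M.H) hz hk

lemma muAdv_eq (hk : k ≤ K) :
    o.muAdv (k + 1) h s a = weightedAvg (lrWeight M.H) (o.N k h s a) fun n =>
      (o.atVisit o.V h s a n - o.atVisit o.VR h s a n) (o.nextState h s a n) := by
  have hform := o.eq_weightedAvg_lrWeight_of_update hh s a (z := fun k => o.muAdv k h s a)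
    (y := fun k => (o.V k (h + 1) (o.st k (h + 1)) - o.VR k (h + 1) (o.st k (h + 1))))
    (fun k hk => o.muAdv_upd k hk h hh s a) hk
  rwa [(o.mom_init h s a).2.2.1, ite_self, zero_add] at hform

lemma sigAdv_eq (hk : k ≤ K) :
    o.sigAdv (k + 1) h s a = weightedAvg (lrWeight M.H) (o.N k h s a) fun n =>
      (o.atVisit o.V h s a n - o.atVisit o.VR h s a n) (o.nextState h s a n) ^ 2 := by
  have hform := o.eq_weightedAvg_lrWeight_of_update hh s a (z := fun k => o.sigAdv k h s a)
    (y := fun k => (o.V k (h + 1) (o.st k (h + 1)) - o.VR k (h + 1) (o.st k (h + 1))) ^ 2)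
    (fun k hk => o.sigAdv_upd k hk h hh s a) hk
  rwa [(o.mom_init h s a).2.2.2.1, ite_self, zero_add] at hform

lemma BR_eq (hk : k ≤ K) :
    o.BR (k + 1) h s a = cb * √(iota S A K M.H δ / o.N k h s a)
      * (√(weightedVar uniformWeight (o.N k h s a) fun n =>
          o.atVisit o.VR h s a n (o.nextState h s a n))
        + √M.H * √(weightedVar (lrWeight M.H) (o.N k h s a) fun n =>
          (o.atVisit o.V h s a n - o.atVisit o.VR h s a n) (o.nextState h s a n))) := by
  induction k with
  | zero => simp [o.N_init, o.mom_init]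
  | succ k ih =>
    rw [o.BR_upd (k + 1) (mem_Icc.2 ⟨by lia, hk⟩) h hh s a]
    by_cases hv : o.Visits h s a (k + 1)
    · rw [if_pos hv, o.sigRef_eq hh s a hk, o.muRef_eq hh s a hk, o.sigAdv_eq hh s a hk,
        o.muAdv_eq hh s a hk]
      rfl
    · rw [if_neg hv, ih (by lia), o.N_succ_of_not_visits hh hk hv]

variable {s a}

lemma QUCB_eq (hk : k ≤ K) (hN : 1 ≤ o.N k h s a) :
    o.QUCB (k + 1) h s a = M.r h s a
      + (weightedAvg (lrWeight M.H) (o.N k h s a) fun n =>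
          o.atVisit o.V h s a n (o.nextState h s a n))
      + weightedAvg (lrWeight M.H) (o.N k h s a) fun n =>
          cb * √((M.H : ℝ) ^ 3 * iota S A K M.H δ / n) := by
  rw [o.eq_weightedAvg_lrWeight_of_update hh s a (z := fun k => o.QUCB k h s a)
    (y := fun k => M.r h s a + o.V k (h + 1) (o.st k (h + 1))
      + cb * √((M.H : ℝ) ^ 3 * iota S A K M.H δ / o.N k h s a))
    (fun k hk => o.QUCB_upd k hk h hh s a) hk, if_neg (by lia), zero_add]
  conv_rhs => rw [← (isAveraging_lrWeight M.H_pos).weightedAvg_const hN (M.r h s a)]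
  rw [← map_add, ← map_add]
  refine weightedAvg_congr _ fun n hn => ?_
  rw [o.N_kvis hh (mem_Icc.1 hn).1 (mem_Icc.1 hn).2 hk]
  rfl

lemma QLCB_eq (hk : k ≤ K) (hN : 1 ≤ o.N k h s a) :
    o.QLCB (k + 1) h s a = M.r h s a
      + (weightedAvg (lrWeight M.H) (o.N k h s a) fun n =>
          o.atVisit o.VLCB h s a n (o.nextState h s a n))
      - weightedAvg (lrWeight M.H) (o.N k h s a) fun n =>
          cb * √((M.H : ℝ) ^ 3 * iota S A K M.H δ / n) := by
  rw [o.eq_weightedAvg_lrWeight_of_update hh s a (z := fun k => o.QLCB k h s a)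
    (y := fun k => M.r h s a + o.VLCB k (h + 1) (o.st k (h + 1))
      - cb * √((M.H : ℝ) ^ 3 * iota S A K M.H δ / o.N k h s a))
    (fun k hk => o.QLCB_upd k hk h hh s a) hk, if_neg (by lia), zero_add]
  conv_rhs => rw [← (isAveraging_lrWeight M.H_pos).weightedAvg_const hN (M.r h s a)]
  rw [← map_add, ← map_sub]
  refine weightedAvg_congr _ fun n hn => ?_
  rw [o.N_kvis hh (mem_Icc.1 hn).1 (mem_Icc.1 hn).2 hk]
  rfl

/-- The factor `(1 - η_n) / η_n` in the definition of `b_h^R` makes the bonuses telescope: up to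
`B_h^R`, the estimate `Q_h^R` follows a Q-learning recursion of its own. -/
lemma QR_sub_BR_succ (hk : k ∈ Icc 1 K) :
    o.QR (k + 1) h s a - o.BR (k + 1) h s a = if o.Visits h s a k then
      (1 - lr M.H (o.N k h s a)) * (o.QR k h s a - o.BR k h s a)
        + lr M.H (o.N k h s a) * (M.r h s a + o.V k (h + 1) (o.st k (h + 1))
          - o.VR k (h + 1) (o.st k (h + 1)) + o.muRef (k + 1) h s a
          + cb * (M.H : ℝ) ^ 2 * iota S A K M.H δ / (o.N k h s a : ℝ) ^ ((3 : ℝ) / 4))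
      else o.QR k h s a - o.BR k h s a := by
  rw [o.QR_upd k hk h hh s a]
  split_ifs with hv
  · have hlr : lr M.H (o.N k h s a) ≠ 0 := by
      have : (0 : ℝ) < M.H := by exact_mod_cast M.H_pos
      rw [lr]; positivity
    rw [o.bR_def k hk h hh, ← hv.1, ← hv.2, o.dR_upd k hk h hh s a, if_pos hv]
    field_simp
    ring
  · rw [o.BR_upd k hk h hh s a, if_neg hv]

lemma QR_eq (hk : k ≤ K) (hN : 1 ≤ o.N k h s a) :
    o.QR (k + 1) h s a = M.r h s a
      + (weightedAvg (lrWeight M.H) (o.N k h s a) fun n =>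
          (o.atVisit o.V h s a n - o.atVisit o.VR h s a n) (o.nextState h s a n))
      + (weightedAvg (lrMeanWeight M.H) (o.N k h s a) fun n =>
          o.atVisit o.VR h s a n (o.nextState h s a n))
      + (weightedAvg (lrWeight M.H) (o.N k h s a) fun n =>
          cb * (M.H : ℝ) ^ 2 * iota S A K M.H δ / (n : ℝ) ^ ((3 : ℝ) / 4))
      + o.BR (k + 1) h s a := by
  rw [← sub_eq_iff_eq_add]
  refine (o.eq_weightedAvg_lrWeight_of_update hh s a
    (z := fun k => o.QR k h s a - o.BR k h s a) (fun k hk => o.QR_sub_BR_succ hh hk) hk).trans ?_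
  rw [if_neg (by lia), zero_add, weightedAvg_lrMeanWeight]
  conv_rhs => rw [← (isAveraging_lrWeight M.H_pos).weightedAvg_const hN (M.r h s a)]
  rw [← map_add, ← map_add, ← map_add]
  refine weightedAvg_congr _ fun n hn => ?_
  obtain ⟨hn1, hnN⟩ := mem_Icc.1 hn
  have hvis := mem_Icc.1 (o.kvis_mem_Icc hh hn1 hnN hk)
  simp only [Pi.add_apply]
  rw [o.muRef_eq hh s a (hvis.2.trans hk), o.N_kvis hh hn1 hnN hk, add_sub_assoc]
  rfl

end ClosedForms

end QLAlg

/-! ## The iterates are determined by the trajectory -/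

namespace QLAlg

variable {S A : Type} [Fintype S] [Fintype A] [Nonempty S] [Nonempty A]
  [DecidableEq S] [DecidableEq A] {M : MDP S A} {K : ℕ} {cb δ : ℝ}

/-- Two runs of the algorithm have the same estimates at step `h` at the beginning of
episode `k`. -/
structure AgreeAt (o o' : QLAlg M K cb δ) (k h : ℕ) : Prop where
  N : o.N (k - 1) h = o'.N (k - 1) h
  Q : o.Q k h = o'.Q k h
  QUCB : o.QUCB k h = o'.QUCB k h
  QLCB : o.QLCB k h = o'.QLCB k h
  QR : o.QR k h = o'.QR k h
  muRef : o.muRef k h = o'.muRef k h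
  sigRef : o.sigRef k h = o'.sigRef k h
  muAdv : o.muAdv k h = o'.muAdv k h
  sigAdv : o.sigAdv k h = o'.sigAdv k h
  BR : o.BR k h = o'.BR k h
  V : o.V k h = o'.V k h
  VLCB : o.VLCB k h = o'.VLCB k h
  VR : o.VR k h = o'.VR k h
  uref : o.uref k h = o'.uref k h

/-- Two runs of the algorithm have the same values at step `h` at the beginning of episode `k`. -/
structure ValuesAgreeAt (o o' : QLAlg M K cb δ) (k h : ℕ) : Prop where
  V : o.V k h = o'.V k h
  VLCB : o.VLCB k h = o'.VLCB k h
  VR : o.VR k h = o'.VR k h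

variable {o o' : QLAlg M K cb δ} {k h : ℕ}

lemma agreeAt_one (o o' : QLAlg M K cb δ) (hh : h ∈ Icc 1 M.H) : AgreeAt o o' 1 h := by
  constructor <;> ext <;>
    simp only [Nat.sub_self, N_init, Q_init _ h hh, QUCB_init _ h hh, QLCB_init _ h hh,
      QR_init _ h hh, V_init _ h hh, VLCB_init _ h hh, VR_init _ h hh, uref_init,
      fun o : QLAlg M K cb δ => o.mom_init h]

lemma valuesAgreeAt_of_agreeAt (hagree : ∀ h ∈ Icc 1 M.H, AgreeAt o o' k h)
    (hh : h ∈ Icc 1 (M.H + 1)) : ValuesAgreeAt o o' k h := by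
  obtain ⟨h1, hH⟩ := mem_Icc.1 hh
  rcases hH.lt_or_eq with hlt | rfl
  · have agree := hagree h (mem_Icc.2 ⟨h1, Nat.lt_succ_iff.1 hlt⟩)
    exact ⟨agree.V, agree.VLCB, agree.VR⟩
  · constructor <;> ext <;> simp only [V_terminal]

lemma AgreeAt.N_eq (agree : AgreeAt o o' k h) (hh : h ∈ Icc 1 M.H) (hk : k ∈ Icc 1 K)
    (hst : o.st k h = o'.st k h) (hac : o.ac k h = o'.ac k h) : o.N k h = o'.N k h := by
  ext s a
  rw [o.N_upd k hk h hh, o'.N_upd k hk h hh, agree.N, hst, hac]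

lemma AgreeAt.VR_succ_eq (agree : AgreeAt o o' k h) (hh : h ∈ Icc 1 M.H) (hk : k ∈ Icc 1 K)
    (hst : o.st k h = o'.st k h) (hV : o.V (k + 1) h = o'.V (k + 1) h)
    (hVLCB : o.VLCB (k + 1) h = o'.VLCB (k + 1) h) : o.VR (k + 1) h = o'.VR (k + 1) h := by
  ext s
  by_cases hs : s = o.st k h
  · have hpos := o'.VR_upd_pos k hk h hh
    have hneg := o'.VR_upd_neg k hk h hh
    rw [← hst, ← hV, ← hVLCB, ← agree.uref] at hpos hneg
    rw [hs]
    by_cases hupdate : 1 < o.V (k + 1) h (o.st k h) - o.VLCB (k + 1) h (o.st k h) ∨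
        o.uref k h (o.st k h)
    · rw [o.VR_upd_pos k hk h hh hupdate, hpos hupdate]
    · rw [o.VR_upd_neg k hk h hh hupdate, hneg hupdate, agree.VR]
  · rw [o.VR_upd_other k hk h hh s hs, o'.VR_upd_other k hk h hh s (hst ▸ hs), agree.VR]

lemma AgreeAt.uref_succ_eq (agree : AgreeAt o o' k h) (hh : h ∈ Icc 1 M.H) (hk : k ∈ Icc 1 K)
    (hst : o.st k h = o'.st k h) (hV : o.V (k + 1) h = o'.V (k + 1) h)
    (hVLCB : o.VLCB (k + 1) h = o'.VLCB (k + 1) h) : o.uref (k + 1) h = o'.uref (k + 1) h := by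
  ext s
  by_cases hs : s = o.st k h
  · have hpos := o'.uref_upd_pos k hk h hh
    have hneg := o'.uref_upd_neg k hk h hh
    rw [← hst, ← hV, ← hVLCB] at hpos hneg
    rw [hs]
    by_cases hgap : 1 < o.V (k + 1) h (o.st k h) - o.VLCB (k + 1) h (o.st k h)
    · exact iff_of_true (o.uref_upd_pos k hk h hh hgap) (hpos hgap)
    · exact iff_of_false (o.uref_upd_neg k hk h hh hgap) (hneg hgap)
  · rw [o.uref_upd_other k hk h hh s hs, o'.uref_upd_other k hk h hh s (hst ▸ hs), agree.uref]

lemma AgreeAt.succ (agree : AgreeAt o o' k h) (values : ValuesAgreeAt o o' k (h + 1))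
    (hh : h ∈ Icc 1 M.H) (hk : k ∈ Icc 1 K) (hst : o.st k h = o'.st k h)
    (hst_succ : o.st k (h + 1) = o'.st k (h + 1)) (hac : o.ac k h = o'.ac k h) :
    AgreeAt o o' (k + 1) h := by
  have hN := agree.N_eq hh hk hst hac
  have hmuRef : o.muRef (k + 1) h = o'.muRef (k + 1) h := by
    ext; simp only [muRef_upd _ k hk h hh, agree.muRef, values.VR, hN, hst, hst_succ, hac]
  have hsigRef : o.sigRef (k + 1) h = o'.sigRef (k + 1) h := by
    ext; simp only [sigRef_upd _ k hk h hh, agree.sigRef, values.VR, hN, hst, hst_succ, hac]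
  have hmuAdv : o.muAdv (k + 1) h = o'.muAdv (k + 1) h := by
    ext
    simp only [muAdv_upd _ k hk h hh, agree.muAdv, values.V, values.VR, hN, hst, hst_succ, hac]
  have hsigAdv : o.sigAdv (k + 1) h = o'.sigAdv (k + 1) h := by
    ext
    simp only [sigAdv_upd _ k hk h hh, agree.sigAdv, values.V, values.VR, hN, hst, hst_succ, hac]
  have hBR : o.BR (k + 1) h = o'.BR (k + 1) h := by
    ext
    simp only [BR_upd _ k hk h hh, agree.BR, hmuRef, hsigRef, hmuAdv, hsigAdv, hN, hst, hac]
  have hQUCB : o.QUCB (k + 1) h = o'.QUCB (k + 1) h := by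
    ext; simp only [QUCB_upd _ k hk h hh, agree.QUCB, values.V, hN, hst, hst_succ, hac]
  have hQLCB : o.QLCB (k + 1) h = o'.QLCB (k + 1) h := by
    ext; simp only [QLCB_upd _ k hk h hh, agree.QLCB, values.VLCB, hN, hst, hst_succ, hac]
  have hQR : o.QR (k + 1) h = o'.QR (k + 1) h := by
    ext s a
    rw [← sub_left_inj, o.QR_sub_BR_succ hh hk, hBR, o'.QR_sub_BR_succ hh hk]
    simp only [agree.QR, agree.BR, hmuRef, values.V, values.VR, hN, Visits, hst, hst_succ, hac]
  have hQ : o.Q (k + 1) h = o'.Q (k + 1) h := by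
    ext; simp only [Q_upd _ k hk h hh, agree.Q, hQR, hQUCB, hst, hac]
  have hV : o.V (k + 1) h = o'.V (k + 1) h := by
    ext; simp only [V_upd _ k hk h hh, agree.V, hQ, hst]
  have hVLCB : o.VLCB (k + 1) h = o'.VLCB (k + 1) h := by
    ext; simp only [VLCB_upd _ k hk h hh, agree.VLCB, hQLCB, hst]
  exact ⟨hN, hQ, hQUCB, hQLCB, hQR, hmuRef, hsigRef, hmuAdv, hsigAdv, hBR, hV, hVLCB,
    agree.VR_succ_eq hh hk hst hV hVLCB, agree.uref_succ_eq hh hk hst hV hVLCB⟩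

lemma agreeAt_of_forall_lt (hk : k ∈ Icc 1 K)
    (hst : ∀ i ∈ Icc 1 (k - 1), ∀ j ∈ Icc 1 (M.H + 1), o.st i j = o'.st i j)
    (hac : ∀ i ∈ Icc 1 (k - 1), ∀ j ∈ Icc 1 M.H, o.ac i j = o'.ac i j) :
    ∀ h ∈ Icc 1 M.H, AgreeAt o o' k h := by
  obtain ⟨hk1, hkK⟩ := mem_Icc.1 hk
  clear hk
  induction k, hk1 using Nat.le_induction with
  | base => exact fun h hh => agreeAt_one o o' hh
  | succ k hk1 ih =>
    have hsub : Icc 1 (k - 1) ⊆ Icc 1 (k + 1 - 1) := Icc_subset_Icc_right (by omega)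
    have hlast : k ∈ Icc 1 (k + 1 - 1) := mem_Icc.2 ⟨hk1, le_rfl⟩
    have agree := ih (fun i hi => hst i (hsub hi)) (fun i hi => hac i (hsub hi)) (by omega)
    intro h hh
    have hbounds := mem_Icc.1 hh
    exact (agree h hh).succ
      (valuesAgreeAt_of_agreeAt agree (mem_Icc.2 ⟨by omega, by omega⟩)) hh
      (mem_Icc.2 ⟨hk1, by omega⟩) (hst k hlast h (mem_Icc.2 ⟨by omega, by omega⟩))
      (hst k hlast (h + 1) (mem_Icc.2 ⟨by omega, by omega⟩)) (hac k hlast h hh)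

/-- The trajectory before episode `k`, together with the state and the action at step `h` of
episode `k`. -/
def history (o : QLAlg M K cb δ) (k h : ℕ) :
    (Icc 1 (k - 1) → Icc 1 (M.H + 1) → S) × (Icc 1 (k - 1) → Icc 1 M.H → A) × S × A :=
  (fun i j => o.st i j, fun i j => o.ac i j, o.st k h, o.ac k h)

/-- The part of the state of the algorithm at step `h` of episode `k` that enters the updates
of the estimates. -/
def updateData (o : QLAlg M K cb δ) (k h : ℕ) :
    (S → A → ℕ) × (S → ℝ) × (S → ℝ) × S × A :=
  (o.N k h, o.V k (h + 1), o.VR k (h + 1), o.st k h, o.ac k h)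

lemma updateData_eq_of_history_eq (hh : h ∈ Icc 1 M.H) (hk : k ∈ Icc 1 K)
    (heq : o.history k h = o'.history k h) : o.updateData k h = o'.updateData k h := by
  simp only [history, Prod.mk.injEq, funext_iff, Subtype.forall] at heq
  obtain ⟨hst_past, hac_past, hst, hac⟩ := heq
  have agree := agreeAt_of_forall_lt hk hst_past hac_past
  have values : ValuesAgreeAt o o' k (h + 1) :=
    valuesAgreeAt_of_agreeAt agree (mem_Icc.2 ⟨by omega, by have := mem_Icc.1 hh; omega⟩)
  simp only [updateData, (agree h hh).N_eq hh hk hst hac, values.V, values.VR, hst, hac]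

end QLAlg

lemma measurable_array {Ω ι κ β : Type*} {_ : MeasurableSpace Ω} [MeasurableSpace β]
    {X : Ω → ι → κ → β} (hX : ∀ i j, Measurable fun ω => X ω i j) : Measurable X :=
  measurable_pi_lambda _ fun i => measurable_pi_lambda _ (hX i)

lemma measurable_of_factorsThrough {Ω α β : Type*} {_ : MeasurableSpace Ω} [MeasurableSpace α]
    [Countable α] [MeasurableSingletonClass α] [MeasurableSpace β] [Nonempty β]
    {X : Ω → α} (hX : Measurable X) {f : Ω → β} (hf : f.FactorsThrough X) : Measurable f := by
  have hext : Function.extend X f (fun _ => Classical.arbitrary β) ∘ X = f :=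
    funext fun ω => hf.extend_apply _ ω
  exact hext ▸ (measurable_of_countable _).comp hX

section Trajectory

variable {S A : Type} [Fintype S] [Fintype A] [Nonempty S] [Nonempty A]
  [DecidableEq S] [DecidableEq A] [MeasurableSpace S] [MeasurableSpace A]
  {M : MDP S A} {K : ℕ} {cb δ : ℝ} {Ω : Type} {m0 : MeasurableSpace Ω} {μ : Measure Ω}
  {𝓕 : Filtration ℕ m0} {k h : ℕ}

/-- The information available at step `h` of the successive episodes. -/
def episodeFiltration (𝓕 : Filtration ℕ m0) (H h : ℕ) : Filtration ℕ m0 where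
  seq k := 𝓕 ((k - 1) * H + h)
  mono' i j hij := 𝓕.mono (by gcongr)
  le' k := 𝓕.le _

lemma IsMDPTrajectory.measurable_history [MeasurableSingletonClass S] [MeasurableSingletonClass A]
    {alg : Ω → QLAlg M K cb δ}
    (htraj : IsMDPTrajectory μ M K 𝓕 (fun k h ω => (alg ω).st k h) fun k h ω => (alg ω).ac k h)
    (hh : h ∈ Icc 1 M.H) (hk : k ∈ Icc 1 K) :
    Measurable[episodeFiltration 𝓕 M.H h k] fun ω => (alg ω).history k h := by
  obtain ⟨hst, hac, -⟩ := htraj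
  obtain ⟨hh1, hhH⟩ := mem_Icc.1 hh
  obtain ⟨hk1, hkK⟩ := mem_Icc.1 hk
  have htime : ∀ i ∈ Icc 1 (k - 1), ∀ j ≤ M.H + 1, (i - 1) * M.H + j ≤ (k - 1) * M.H + h := by
    intro i hi j hj
    obtain ⟨hi1, hik⟩ := mem_Icc.1 hi
    have := Nat.mul_le_mul_right M.H hik
    obtain ⟨m, rfl⟩ := Nat.exists_eq_add_of_le' hi1
    rw [add_one_mul] at this
    simp only [Nat.add_sub_cancel]
    omega
  have hpast : Icc 1 (k - 1) ⊆ Icc 1 K := Icc_subset_Icc_right (by omega)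
  refine Measurable.prodMk ?_ (Measurable.prodMk ?_
    ((hst k hk h (mem_Icc.2 ⟨hh1, by omega⟩)).prodMk (hac k hk h hh)))
  · refine measurable_array fun i j => ?_
    exact (hst i (hpast i.2) j j.2).mono (𝓕.mono (htime i i.2 j (mem_Icc.1 j.2).2)) le_rfl
  · refine measurable_array fun i j => ?_
    exact (hac i (hpast i.2) j j.2).mono
      (𝓕.mono (htime i i.2 j ((mem_Icc.1 j.2).2.trans (by omega)))) le_rfl

lemma IsMDPTrajectory.isSampledFrom [MeasurableSingletonClass S] [MeasurableSingletonClass A]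
    {alg : Ω → QLAlg M K cb δ}
    (htraj : IsMDPTrajectory μ M K 𝓕 (fun k h ω => (alg ω).st k h) fun k h ω => (alg ω).ac k h)
    (hh : h ∈ Icc 1 M.H) :
    IsSampledFrom μ (episodeFiltration 𝓕 M.H h) K (fun k ω => (alg ω).st k (h + 1))
      fun k ω => M.P h ((alg ω).st k h) ((alg ω).ac k h) where
  measurable_sample k hk := by
    obtain ⟨hh1, hhH⟩ := mem_Icc.1 hh
    obtain ⟨m, rfl⟩ := Nat.exists_eq_add_of_le' (mem_Icc.1 hk).1
    refine (htraj.1 (m + 1) hk (h + 1) (mem_Icc.2 ⟨by omega, by omega⟩)).mono (𝓕.mono ?_) le_rfl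
    simp only [Nat.add_sub_cancel, add_one_mul]
    omega
  measurable_law k hk := measurable_of_factorsThrough (htraj.measurable_history hh hk)
    fun ω ω' heq => by
      simp only [QLAlg.history, Prod.mk.injEq] at heq
      rw [heq.2.2.1, heq.2.2.2]
  law_mem k _ ω := M.P_mem_stdSimplex _ _ _
  condExp_indicator k hk s := htraj.2.2 k hk h hh s

lemma IsMDPTrajectory.measurable_comp_updateData [MeasurableSingletonClass S]
    [MeasurableSingletonClass A] {alg : Ω → QLAlg M K cb δ} {β : Type*} [MeasurableSpace β]
    [Nonempty β]
    (htraj : IsMDPTrajectory μ M K 𝓕 (fun k h ω => (alg ω).st k h) fun k h ω => (alg ω).ac k h)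
    (hh : h ∈ Icc 1 M.H) (hk : k ∈ Icc 1 K) (f : (S → A → ℕ) × (S → ℝ) × (S → ℝ) × S × A → β) :
    Measurable[episodeFiltration 𝓕 M.H h k] fun ω => f ((alg ω).updateData k h) :=
  measurable_of_factorsThrough (htraj.measurable_history hh hk) fun _ _ heq =>
    congrArg f (QLAlg.updateData_eq_of_history_eq hh hk heq)

end Trajectory

/-! ## The good event -/

/-- The truncation of a real-valued function to values in `[0, H]`. -/
noncomputable def clip {S : Type*} (H : ℝ) (f : S → ℝ) (s : S) : ℝ := max 0 (min (f s) H)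

section Clip

variable {S : Type*} {H : ℝ} {f g : S → ℝ}

lemma clip_mem_Icc (hH : 0 ≤ H) (f : S → ℝ) (s : S) : clip H f s ∈ Set.Icc 0 H :=
  ⟨le_max_left _ _, max_le hH (min_le_right _ _)⟩

lemma clip_eq_self (hf : ∀ s, f s ∈ Set.Icc 0 H) : clip H f = f := by
  ext s
  rw [clip, min_eq_left (hf s).2, max_eq_right (hf s).1]

lemma abs_clip_le (hH : 0 ≤ H) (f : S → ℝ) (s : S) : |clip H f s| ≤ H := by
  rw [abs_of_nonneg (clip_mem_Icc hH f s).1]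
  exact (clip_mem_Icc hH f s).2

lemma abs_clip_sub_clip_le (hH : 0 ≤ H) (f g : S → ℝ) (s : S) :
    |clip H f s - clip H g s| ≤ H := by
  obtain ⟨hf0, hfH⟩ := clip_mem_Icc hH f s
  obtain ⟨hg0, hgH⟩ := clip_mem_Icc hH g s
  exact abs_le.2 ⟨by linarith, by linarith⟩

end Clip

/-- A quantity whose average along the visits of a state-action pair must concentrate:
`value V VR` is the function of the next state that is averaged when the current value and
reference value at the next step are `V` and `VR`, and `weight` gives the weights of the average. -/
structure Probe (S : Type*) where
  value : (S → ℝ) → (S → ℝ) → S → ℝ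
  bound : ℝ
  weight : ℕ → ℕ → ℝ
  conc : ℝ
  isAveraging : IsAveraging weight conc
  one_le_conc : 1 ≤ conc
  bound_pos : 0 < bound
  abs_value_le : ∀ V VR s, |value V VR s| ≤ bound

namespace Probe

variable {S A : Type} [Fintype S] [Fintype A]

/-- The square of a probe. -/
def sq (π : Probe S) : Probe S where
  value V VR := π.value V VR ^ 2
  bound := π.bound ^ 2
  weight := π.weight
  conc := π.conc
  isAveraging := π.isAveraging
  one_le_conc := π.one_le_conc
  bound_pos := pow_pos π.bound_pos 2
  abs_value_le V VR s := by
    rw [Pi.pow_apply, abs_pow]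
    exact pow_le_pow_left₀ (abs_nonneg _) (π.abs_value_le V VR s) 2

/-- The learning-rate average of a fixed function, truncated to `[0, H]`. -/
noncomputable def fixed (M : MDP S A) (f : S → ℝ) : Probe S where
  value _ _ := clip M.H f
  bound := M.H
  weight := lrWeight M.H
  conc := 2 * M.H
  isAveraging := isAveraging_lrWeight M.H_pos
  one_le_conc := by have : (1 : ℝ) ≤ M.H := by exact_mod_cast M.H_pos
                    linarith
  bound_pos := by exact_mod_cast M.H_pos
  abs_value_le _ _ := abs_clip_le M.H.cast_nonneg _

/-- The learning-rate average of the advantage, with both values truncated to `[0, H]`. -/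
noncomputable def advantage (M : MDP S A) : Probe S where
  value V VR := clip M.H V - clip M.H VR
  bound := M.H
  weight := lrWeight M.H
  conc := 2 * M.H
  isAveraging := isAveraging_lrWeight M.H_pos
  one_le_conc := by have : (1 : ℝ) ≤ M.H := by exact_mod_cast M.H_pos
                    linarith
  bound_pos := by exact_mod_cast M.H_pos
  abs_value_le _ _ := abs_clip_sub_clip_le M.H.cast_nonneg _ _

/-- The `w`-average of the reference value, truncated to `[0, H]`. -/
noncomputable def reference (M : MDP S A) (w : ℕ → ℕ → ℝ) (hw : IsAveraging w 2) : Probe S where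
  value _ VR := clip M.H VR
  bound := M.H
  weight := w
  conc := 2
  isAveraging := hw
  one_le_conc := one_le_two
  bound_pos := by exact_mod_cast M.H_pos
  abs_value_le _ _ := abs_clip_le M.H.cast_nonneg _

end Probe

namespace QLAlg

variable {S A : Type} [Fintype S] [Fintype A] [Nonempty S] [Nonempty A]
  [DecidableEq S] [DecidableEq A] {M : MDP S A} {K : ℕ} {cb δ x : ℝ} {h : ℕ}

/-- Freedman's inequality with deviation parameter `x` holds for the averages of the probe `π` over
the first visits of every state-action pair at step `h`. -/
def Concentrates (o : QLAlg M K cb δ) (x : ℝ) (h : ℕ) (π : Probe S) : Prop :=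
  ∀ s a, ∀ N ∈ Icc 1 (o.N K h s a), HasFreedmanDeviation π.weight π.conc π.bound x (M.P h s a)
    (fun n => π.value (o.atVisit o.V h s a n) (o.atVisit o.VR h s a n)) (o.nextState h s a) N

/-- The multiple of the probe `π` evaluated in episode `k` by the `j`-th exponential supermartingale
for the first `N` visits of `(s, a)` at step `h`; it vanishes in episodes without a visit. -/
noncomputable def tiltedValue (o : QLAlg M K cb δ) (π : Probe S) (h : ℕ) (s : S) (a : A) (σ : ℝ)
    (N j k : ℕ) : S → ℝ :=
  if o.Visits h s a k then (σ * tilt π.weight π.conc π.bound N j (o.N k h s a)) •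
    π.value (o.V k (h + 1)) (o.VR k (h + 1)) else 0

/-- The logarithm of the exponential supermartingale of `QLAlg.tiltedValue` after `K` episodes. -/
noncomputable def logFluctuation (o : QLAlg M K cb δ) (π : Probe S) (h : ℕ) (s : S) (a : A) (σ : ℝ)
    (N j : ℕ) : ℝ :=
  ∑ k ∈ Icc 1 K, freedmanIncrement (M.P h (o.st k h) (o.ac k h)) (o.tiltedValue π h s a σ N j k)
    (o.st k (h + 1))

/-- The quantities at step `h` whose concentration makes the bonuses of the algorithm valid. -/
noncomputable def probes (M : MDP S A) (h : ℕ) : Fin 6 → Probe S :=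
  ![.fixed M (M.Vstar (h + 1)), .advantage M, (Probe.advantage M).sq,
    .reference M (lrMeanWeight M.H) (isAveraging_lrMeanWeight M.H_pos),
    .reference M uniformWeight (isAveraging_uniformWeight.mono one_le_two),
    (Probe.reference M uniformWeight (isAveraging_uniformWeight.mono one_le_two)).sq]

/-- The good event: all the averages that enter the analysis concentrate. -/
def IsGood (o : QLAlg M K cb δ) (x : ℝ) : Prop :=
  ∀ h ∈ Icc 1 M.H, ∀ i, o.Concentrates x h (probes M h i)

variable {σ : ℝ} {N j : ℕ} {s : S} {a : A} {π : Probe S} {o : QLAlg M K cb δ}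

lemma abs_tiltedValue_le (hσ : σ = 1 ∨ σ = -1) (hN : 1 ≤ N) (hj : 1 ≤ j) (k : ℕ) (s' : S) :
    |o.tiltedValue π h s a σ N j k s'| ≤ 1 / 2 := by
  have hσ_abs : |σ| = 1 := by rcases hσ with rfl | rfl <;> norm_num
  rw [tiltedValue]
  split_ifs
  · rw [Pi.smul_apply, smul_eq_mul, abs_mul, abs_mul, hσ_abs, one_mul]
    refine le_trans ?_ (π.isAveraging.abs_tilt_le (zero_lt_one.trans_le π.one_le_conc) π.bound_pos
      hN hj (o.N k h s a))
    gcongr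
    exact π.abs_value_le _ _ s'
  · norm_num

lemma logFluctuation_eq_sum_visits (hh : h ∈ Icc 1 M.H) (hN : N ≤ o.N K h s a) :
    o.logFluctuation π h s a σ N j = ∑ n ∈ Icc 1 N, freedmanIncrement (M.P h s a)
      ((σ * tilt π.weight π.conc π.bound N j n) •
        π.value (o.atVisit o.V h s a n) (o.atVisit o.VR h s a n)) (o.nextState h s a n) := by
  have hsplit : ∀ k, freedmanIncrement (M.P h (o.st k h) (o.ac k h))
      (o.tiltedValue π h s a σ N j k) (o.st k (h + 1)) = if o.Visits h s a k then
        freedmanIncrement (M.P h s a) ((σ * tilt π.weight π.conc π.bound N j (o.N k h s a)) •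
          π.value (o.V k (h + 1)) (o.VR k (h + 1))) (o.st k (h + 1)) else 0 := by
    intro k
    rw [tiltedValue]
    split_ifs with hv
    · rw [← hv.1, ← hv.2]
    · exact freedmanIncrement_zero _ _
  rw [logFluctuation, sum_congr rfl fun k _ => hsplit k, o.sum_visits_eq_sum_kvis hh _ le_rfl]
  refine ((sum_subset (Icc_subset_Icc_right hN) fun n hn hnN => ?_).trans
    (sum_congr rfl fun n hn => ?_)).symm
  · have hNn : N < n := by simp only [mem_Icc] at hn hnN; lia
    rw [tilt, π.isAveraging.eq_zero_of_lt hNn, mul_zero, mul_zero, zero_smul,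
      freedmanIncrement_zero]
  · rw [o.N_kvis hh (mem_Icc.1 hn).1 (mem_Icc.1 hn).2 le_rfl]
    rfl

lemma concentrates_of_forall_logFluctuation_le (hh : h ∈ Icc 1 M.H) (hx : 1 / 4 ≤ x)
    (hle : ∀ s a, ∀ σ : ℝ, σ = 1 ∨ σ = -1 → ∀ N ∈ Icc 1 K, ∀ j ∈ Icc 1 K,
      o.logFluctuation π h s a σ N j ≤ x) : o.Concentrates x h π := by
  intro s a N hN
  obtain ⟨hN1, hNK⟩ := mem_Icc.1 hN
  have hNle : N ≤ K := hNK.trans (o.N_le hh s a le_rfl)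
  refine π.isAveraging.hasFreedmanDeviation_of_forall_tilt π.one_le_conc π.bound_pos
    (M.P_mem_stdSimplex h s a) (fun n => π.abs_value_le _ _) hN1 hx fun σ hσ j hj => ?_
  rw [← logFluctuation_eq_sum_visits hh hNK]
  exact hle s a σ hσ N (mem_Icc.2 ⟨hN1, hNle⟩) j (Icc_subset_Icc_right hNle hj)

section Probability

variable [MeasurableSpace S] [MeasurableSingletonClass S] [MeasurableSpace A]
  [MeasurableSingletonClass A] {Ω : Type} {m0 : MeasurableSpace Ω} {μ : Measure Ω}
  [IsProbabilityMeasure μ] {𝓕 : Filtration ℕ m0} {alg : Ω → QLAlg M K cb δ}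

lemma measure_le_logFluctuation_le
    (htraj : IsMDPTrajectory μ M K 𝓕 (fun k h ω => (alg ω).st k h) fun k h ω => (alg ω).ac k h)
    (hh : h ∈ Icc 1 M.H) (π : Probe S) (s : S) (a : A) (hσ : σ = 1 ∨ σ = -1) (hN : 1 ≤ N)
    (hj : 1 ≤ j) (x : ℝ) :
    μ {ω | x ≤ (alg ω).logFluctuation π h s a σ N j} ≤ ENNReal.ofReal (Real.exp (-x)) :=
  (htraj.isSampledFrom hh).measure_le_logSupermart_le
    (g := fun k ω => (alg ω).tiltedValue π h s a σ N j k)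
    (fun _ hk => htraj.measurable_comp_updateData hh hk fun d =>
      if s = d.2.2.2.1 ∧ a = d.2.2.2.2 then
        (σ * tilt π.weight π.conc π.bound N j (d.1 s a)) • π.value d.2.1 d.2.2.1 else 0)
    (fun k _ _ => abs_tiltedValue_le hσ hN hj k) x

theorem measure_not_isGood_le
    (htraj : IsMDPTrajectory μ M K 𝓕 (fun k h ω => (alg ω).st k h) fun k h ω => (alg ω).ac k h)
    (hx : 1 / 4 ≤ x) :
    μ {ω | ¬(alg ω).IsGood x} ≤ ENNReal.ofReal
      (12 * (Fintype.card S * Fintype.card A * M.H * K ^ 2) * Real.exp (-x)) := by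
  let indices : Finset (ℕ × Fin 6 × S × A × ℝ × ℕ × ℕ) :=
    Icc 1 M.H ×ˢ univ ×ˢ univ ×ˢ univ ×ˢ {1, -1} ×ˢ Icc 1 K ×ˢ Icc 1 K
  let fluctuation (ω : Ω) : ℕ × Fin 6 × S × A × ℝ × ℕ × ℕ → ℝ :=
    fun (h, i, s, a, σ, N, j) => (alg ω).logFluctuation (probes M h i) h s a σ N j
  have hcover : {ω | ¬(alg ω).IsGood x} ⊆ ⋃ i ∈ indices, {ω | x ≤ fluctuation ω i} := by
    intro ω hω
    by_contra hnot
    simp only [Set.mem_iUnion, not_exists] at hnot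
    refine hω fun h hh i => concentrates_of_forall_logFluctuation_le hh hx
      fun s a σ hσ N hN j hj => ?_
    refine (not_le.1 (hnot (h, i, s, a, σ, N, j) ?_)).le
    simp only [indices, mem_product, mem_univ, mem_insert, mem_singleton]
    exact ⟨hh, trivial, trivial, trivial, hσ, hN, hj⟩
  have htail : ∀ i ∈ indices, μ {ω | x ≤ fluctuation ω i} ≤ ENNReal.ofReal (Real.exp (-x)) := by
    rintro ⟨h, i, s, a, σ, N, j⟩ hi
    simp only [indices, mem_product, mem_insert, mem_singleton] at hi
    obtain ⟨hh, -, -, -, hσ, hN, hj⟩ := hi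
    exact measure_le_logFluctuation_le htraj hh _ s a hσ (mem_Icc.1 hN).1 (mem_Icc.1 hj).1 x
  have hcard : (#indices : ℝ) = 12 * (Fintype.card S * Fintype.card A * M.H * K ^ 2) := by
    rw [card_product, card_product, card_product, card_product, card_product, card_product,
      card_pair (by norm_num)]
    simp only [card_univ, Nat.card_Icc, Fintype.card_fin, Nat.add_sub_cancel]
    push_cast
    ring
  calc μ {ω | ¬(alg ω).IsGood x}
      ≤ ∑ i ∈ indices, μ {ω | x ≤ fluctuation ω i} :=
        (measure_mono hcover).trans (measure_biUnion_finset_le _ _)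
    _ ≤ #indices * ENNReal.ofReal (Real.exp (-x)) := by
        simpa only [sum_const, nsmul_eq_mul] using sum_le_sum htail
    _ = ENNReal.ofReal _ := by
        rw [← hcard, ENNReal.ofReal_mul (Nat.cast_nonneg _), ENNReal.ofReal_natCast]

end Probability

end QLAlg

/-! ## Order properties of the iterates -/

lemma mem_Icc_or_eq_of_mem_Icc_succ {i n : ℕ} (hi : i ∈ Icc 1 (n + 1)) :
    i ∈ Icc 1 n ∨ i = n + 1 := by
  grind

namespace MDP

variable {S A : Type} [Fintype S] [Fintype A] [Nonempty A] (M : MDP S A)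

lemma QstarAux_mem_Icc (f h : ℕ) (s : S) (a : A) : M.QstarAux f h s a ∈ Set.Icc (0 : ℝ) f := by
  induction f generalizing h s a with
  | zero => simp [QstarAux]
  | succ f ih =>
    set v : S → ℝ := fun s' => univ.sup' univ_nonempty fun a' => M.QstarAux f (h + 1) s' a'
    have hv : ∀ s', v s' ∈ Set.Icc (0 : ℝ) f := fun s' =>
      ⟨(ih (h + 1) s' (Classical.arbitrary A)).1.trans (le_sup' _ (mem_univ _)),
        sup'_le _ _ fun a' _ => (ih (h + 1) s' a').2⟩
    have hrec : M.QstarAux (f + 1) h s a = M.r h s a + M.P h s a ⬝ᵥ v := rfl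
    have hlow := dotProduct_nonneg_of_mem_stdSimplex (M.P_mem_stdSimplex h s a) fun s' => (hv s').1
    have hupp := dotProduct_le_of_mem_stdSimplex (M.P_mem_stdSimplex h s a) fun s' => (hv s').2
    rw [hrec, Nat.cast_succ]
    exact ⟨by linarith [M.r_nonneg h s a], by linarith [M.r_le_one h s a]⟩

lemma Qstar_mem_Icc {h : ℕ} (hh : 1 ≤ h) (s : S) (a : A) :
    M.Qstar h s a ∈ Set.Icc (0 : ℝ) M.H := by
  have hfuel : ((M.H + 1 - h : ℕ) : ℝ) ≤ M.H := by exact_mod_cast (by lia)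
  exact Set.Icc_subset_Icc_right hfuel (M.QstarAux_mem_Icc _ h s a)

lemma Vstar_mem_Icc {h : ℕ} (hh : 1 ≤ h) (s : S) : M.Vstar h s ∈ Set.Icc (0 : ℝ) M.H :=
  ⟨(M.Qstar_mem_Icc hh s (Classical.arbitrary A)).1.trans (le_sup' _ (mem_univ _)),
    sup'_le _ _ fun a _ => (M.Qstar_mem_Icc hh s a).2⟩

lemma Vstar_terminal (s : S) : M.Vstar (M.H + 1) s = 0 := by
  simp [Vstar, Qstar, QstarAux]

lemma Qstar_eq {h : ℕ} (hh : h ∈ Icc 1 M.H) (s : S) (a : A) :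
    M.Qstar h s a = M.r h s a + M.P h s a ⬝ᵥ M.Vstar (h + 1) := by
  have hfuel : M.H + 1 - h = M.H + 1 - (h + 1) + 1 := by have := mem_Icc.1 hh; lia
  rw [Qstar, hfuel]
  rfl

end MDP

namespace QLAlg

variable {S A : Type} [Fintype S] [Fintype A] [Nonempty S] [Nonempty A]
  [DecidableEq S] [DecidableEq A] {M : MDP S A} {K : ℕ} {cb δ : ℝ} (o : QLAlg M K cb δ) {h k : ℕ}

lemma V_succ_eq_sup' (hh : h ∈ Icc 1 M.H) (s : S) (hk : k ≤ K) :
    o.V (k + 1) h s = univ.sup' univ_nonempty fun a => o.Q (k + 1) h s a := by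
  induction k with
  | zero => simp only [zero_add, o.V_init h hh, o.Q_init h hh, sup'_const]
  | succ k ih =>
    have hk1 : k + 1 ∈ Icc 1 K := mem_Icc.2 ⟨by lia, hk⟩
    rw [o.V_upd _ hk1 h hh]
    split_ifs with hs
    · rfl
    · rw [ih (by lia)]
      exact sup'_congr _ rfl fun a _ => by
        rw [o.Q_upd _ hk1 h hh, if_neg fun hv => hs hv.1]

lemma Q_succ_le (hh : h ∈ Icc 1 M.H) (s : S) (a : A) (hk : k ∈ Icc 1 K) :
    o.Q (k + 1) h s a ≤ o.Q k h s a := by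
  rw [o.Q_upd k hk h hh]
  split_ifs
  · exact (min_le_right _ _).trans (min_le_right _ _)
  · rfl

section Terminal

variable (hh : h ∈ Icc 1 (M.H + 1)) (s : S)

include hh

lemma V_succ_le (hk : k ∈ Icc 1 K) : o.V (k + 1) h s ≤ o.V k h s := by
  rcases mem_Icc_or_eq_of_mem_Icc_succ hh with hh | rfl
  · obtain ⟨hk1, hkK⟩ := mem_Icc.1 hk
    obtain ⟨j, rfl⟩ := Nat.exists_eq_add_of_le' hk1
    rw [o.V_succ_eq_sup' hh s hkK, o.V_succ_eq_sup' hh s (by lia)]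
    exact sup'_mono_fun fun a _ => o.Q_succ_le hh s a hk
  · rw [(o.V_terminal _ s).1, (o.V_terminal _ s).1]

lemma VLCB_le_succ (hk : k ∈ Icc 1 K) : o.VLCB k h s ≤ o.VLCB (k + 1) h s := by
  rcases mem_Icc_or_eq_of_mem_Icc_succ hh with hh | rfl
  · rw [o.VLCB_upd k hk h hh]
    split_ifs
    · exact le_max_right _ _
    · rfl
  · rw [(o.V_terminal _ s).2.2, (o.V_terminal _ s).2.2]

lemma VR_succ_eq_or (hk : k ∈ Icc 1 K) :
    o.VR (k + 1) h s = o.V (k + 1) h s ∨ o.VR (k + 1) h s = o.VR k h s := by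
  rcases mem_Icc_or_eq_of_mem_Icc_succ hh with hh | rfl
  · by_cases hs : s = o.st k h
    · subst hs
      by_cases hu :
          1 < o.V (k + 1) h (o.st k h) - o.VLCB (k + 1) h (o.st k h) ∨ o.uref k h (o.st k h)
      · exact .inl (o.VR_upd_pos k hk h hh hu)
      · exact .inr (o.VR_upd_neg k hk h hh hu)
    · exact .inr (o.VR_upd_other k hk h hh s hs)
  · exact .inl ((o.V_terminal _ s).2.1.trans (o.V_terminal _ s).1.symm)

lemma V_one_eq_VR_one : o.V 1 h s = o.VR 1 h s := by
  rcases mem_Icc_or_eq_of_mem_Icc_succ hh with hh | rfl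
  · rw [o.V_init h hh, o.VR_init h hh]
  · rw [(o.V_terminal _ s).1, (o.V_terminal _ s).2.1]

lemma V_le_VR (hk : k ≤ K) : o.V (k + 1) h s ≤ o.VR (k + 1) h s := by
  induction k with
  | zero => exact (o.V_one_eq_VR_one hh s).le
  | succ k ih =>
    have hk1 : k + 1 ∈ Icc 1 K := mem_Icc.2 ⟨by lia, hk⟩
    rcases o.VR_succ_eq_or hh s hk1 with hR | hR
    · exact hR.ge
    · exact ((o.V_succ_le hh s hk1).trans (ih (by lia))).trans hR.ge

lemma VR_succ_le (hk : k ∈ Icc 1 K) : o.VR (k + 1) h s ≤ o.VR k h s := by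
  obtain ⟨hk1, hkK⟩ := mem_Icc.1 hk
  obtain ⟨j, rfl⟩ := Nat.exists_eq_add_of_le' hk1
  rcases o.VR_succ_eq_or hh s hk with hR | hR
  · exact hR.le.trans ((o.V_succ_le hh s hk).trans (o.V_le_VR hh s (by lia)))
  · exact hR.le

lemma VR_anti {i j : ℕ} (hi : 1 ≤ i) (hij : i ≤ j) (hj : j ≤ K + 1) :
    o.VR j h s ≤ o.VR i h s := by
  induction j, hij using Nat.le_induction with
  | base => rfl
  | succ j hij ih => exact (o.VR_succ_le hh s (mem_Icc.2 ⟨by lia, by lia⟩)).trans (ih (by lia))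

lemma V_anti {i j : ℕ} (hi : 1 ≤ i) (hij : i ≤ j) (hj : j ≤ K + 1) : o.V j h s ≤ o.V i h s := by
  induction j, hij using Nat.le_induction with
  | base => rfl
  | succ j hij ih => exact (o.V_succ_le hh s (mem_Icc.2 ⟨by lia, by lia⟩)).trans (ih (by lia))

lemma VLCB_mono {i j : ℕ} (hi : 1 ≤ i) (hij : i ≤ j) (hj : j ≤ K + 1) :
    o.VLCB i h s ≤ o.VLCB j h s := by
  induction j, hij using Nat.le_induction with
  | base => rfl
  | succ j hij ih => exact (ih (by lia)).trans (o.VLCB_le_succ hh s (mem_Icc.2 ⟨by lia, by lia⟩))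

lemma VR_le (hk : k ∈ Icc 1 (K + 1)) : o.VR k h s ≤ M.H := by
  obtain ⟨hk1, hkK⟩ := mem_Icc.1 hk
  refine (o.VR_anti hh s le_rfl hk1 hkK).trans ?_
  rcases mem_Icc_or_eq_of_mem_Icc_succ hh with hh | rfl
  · exact (o.VR_init h hh s).le
  · exact (o.V_terminal 1 s).2.1.trans_le M.H.cast_nonneg

end Terminal

/-- Once the flag is off, the reference was frozen at a value within `1` of the lower estimate,
which has only increased since. -/
lemma VR_eq_V_or_le (hh : h ∈ Icc 1 M.H) (s : S) (hk : k ≤ K) :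
    o.uref (k + 1) h s ∧ o.VR (k + 1) h s = o.V (k + 1) h s ∨
      ¬o.uref (k + 1) h s ∧ o.VR (k + 1) h s ≤ o.VLCB (k + 1) h s + 1 := by
  induction k with
  | zero => exact .inl ⟨o.uref_init h s, by rw [o.V_init h hh, o.VR_init h hh]⟩
  | succ k ih =>
    have hk1 : k + 1 ∈ Icc 1 K := mem_Icc.2 ⟨by lia, hk⟩
    have hL := o.VLCB_le_succ (Icc_subset_Icc_right (by lia) hh) s hk1
    specialize ih (by lia)
    by_cases hs : s = o.st (k + 1) h
    · subst hs
      by_cases hgap :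
        1 < o.V (k + 1 + 1) h (o.st (k + 1) h) - o.VLCB (k + 1 + 1) h (o.st (k + 1) h)
      · exact .inl ⟨o.uref_upd_pos _ hk1 h hh hgap, o.VR_upd_pos _ hk1 h hh (.inl hgap)⟩
      · refine .inr ⟨o.uref_upd_neg _ hk1 h hh hgap, ?_⟩
        rcases ih with ⟨hu, -⟩ | ⟨hu, hR⟩
        · linarith [o.VR_upd_pos _ hk1 h hh (.inr hu)]
        · linarith [o.VR_upd_neg _ hk1 h hh (not_or.2 ⟨hgap, hu⟩)]
    · rw [o.VR_upd_other _ hk1 h hh s hs, o.uref_upd_other _ hk1 h hh s hs, o.V_upd _ hk1 h hh s,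
        if_neg hs]
      exact ih.imp_right (And.imp_right fun hR => hR.trans (by linarith))

end QLAlg

/-! ## Optimism -/

section Scalar

variable {c ι N : ℝ}

lemma sqrt_mul_sqrt_sqrt_eq_rpow {y : ℝ} (hy : 0 ≤ y) : √y * √√y = y ^ ((3 : ℝ) / 4) := by
  rw [Real.sqrt_eq_rpow, Real.sqrt_eq_rpow, ← Real.rpow_mul hy, ← Real.rpow_add_of_nonneg hy] <;>
    norm_num

lemma sqrt_mul_sqrt_sqrt_div_le {y : ℝ} (hy : 1 ≤ y) (hN : 0 ≤ N) :
    √(y / N) * √√(y / N) ≤ y / N ^ ((3 : ℝ) / 4) := by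
  rw [sqrt_mul_sqrt_sqrt_eq_rpow (by positivity), Real.div_rpow (by positivity) hN]
  gcongr
  exact Real.rpow_le_self_of_one_le hy (by norm_num)

lemma mul_sqrt_le_mul_sqrt {a b y z : ℝ} (ha : 0 ≤ a) (hb : 0 ≤ b) (h : a ^ 2 * y ≤ b ^ 2 * z) :
    a * √y ≤ b * √z := by
  have hroot := Real.sqrt_le_sqrt h
  rwa [Real.sqrt_mul (sq_nonneg a), Real.sqrt_mul (sq_nonneg b), Real.sqrt_sq ha,
    Real.sqrt_sq hb] at hroot

lemma hoeffding_width_le {cb H : ℝ} (hcb : 16 ≤ cb) (hH : 0 ≤ H) (hι : 0 ≤ ι) (hN : 0 ≤ N) :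
    4 * H * √(2 * H / N * (7 * ι)) ≤ cb * √(H ^ 3 * ι / N) := by
  refine mul_sqrt_le_mul_sqrt (by positivity) (by linarith) ?_
  calc (4 * H) ^ 2 * (2 * H / N * (7 * ι)) = 224 * (H ^ 3 * ι / N) := by ring
    _ ≤ cb ^ 2 * (H ^ 3 * ι / N) := by
        gcongr
        nlinarith

lemma empirical_width_le {cb H σ : ℝ} (hcb : 12 ≤ cb) (hc : 1 ≤ c) (hcH : c ≤ H)
    (hι : 1 / 2 ≤ ι) (hN : 0 ≤ N) (hσ : 0 ≤ σ) :
    3 * √(2 * c / N * (7 * ι)) * σ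
        + 13 * H * (√(2 * c / N * (7 * ι)) * √√(2 * c / N * (7 * ι)))
      ≤ cb * √(ι / N) * (√c * σ) + 182 * (H ^ 2 * ι / N ^ ((3 : ℝ) / 4)) := by
  have hH : 0 ≤ H := by linarith
  have leading : 3 * √(2 * c / N * (7 * ι)) ≤ cb * √(ι / N * c) := by
    refine mul_sqrt_le_mul_sqrt (by norm_num) (by linarith) ?_
    calc 3 ^ 2 * (2 * c / N * (7 * ι)) = 126 * (ι / N * c) := by ring
      _ ≤ cb ^ 2 * (ι / N * c) := by
          gcongr
          nlinarith
  have lower_order : √(2 * c / N * (7 * ι)) * √√(2 * c / N * (7 * ι))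
      ≤ 14 * H * ι / N ^ ((3 : ℝ) / 4) := by
    rw [show 2 * c / N * (7 * ι) = 14 * c * ι / N by ring]
    refine (sqrt_mul_sqrt_sqrt_div_le (by nlinarith) hN).trans ?_
    gcongr
  calc _ ≤ cb * √(ι / N * c) * σ + 13 * H * (14 * H * ι / N ^ ((3 : ℝ) / 4)) := by gcongr
    _ = _ := by rw [Real.sqrt_mul (by positivity)]; ring

end Scalar

section Bonus

variable {w : ℕ → ℕ → ℝ} {c y : ℝ} {N : ℕ} (hw : IsAveraging w c) (hN : 1 ≤ N) (hy : 0 ≤ y)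

include hw hN hy

lemma mul_sqrt_div_le_weightedAvg {b : ℝ} (hb : 0 ≤ b) :
    b * √(y / N) ≤ weightedAvg w N fun n => b * √(y / n) := by
  refine hw.le_weightedAvg hN fun n hn => ?_
  obtain ⟨hn1, hnN⟩ := mem_Icc.1 hn
  have : (0 : ℝ) < n := by exact_mod_cast hn1
  gcongr

lemma div_rpow_le_weightedAvg {r : ℝ} (hr : 0 ≤ r) :
    y / (N : ℝ) ^ r ≤ weightedAvg w N fun n => y / (n : ℝ) ^ r := by
  refine hw.le_weightedAvg hN fun n hn => ?_
  obtain ⟨hn1, hnN⟩ := mem_Icc.1 hn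
  have : (0 : ℝ) < n := by exact_mod_cast hn1
  gcongr

end Bonus

namespace QLAlg

variable {S A : Type} [Fintype S] [Fintype A] [Nonempty S] [Nonempty A]
  [DecidableEq S] [DecidableEq A] {M : MDP S A} {K : ℕ} {cb δ : ℝ} (o : QLAlg M K cb δ) {h k : ℕ}

section Clip

variable {i : ℕ} (hh : h ∈ Icc 1 (M.H + 1)) (hi : i ∈ Icc 1 (K + 1)) (hV : M.Vstar h ≤ o.V i h)

include hh hi hV

lemma VR_mem_Icc_of_Vstar_le (s : S) : o.VR i h s ∈ Set.Icc (0 : ℝ) M.H := by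
  obtain ⟨j, rfl⟩ := Nat.exists_eq_add_of_le' (mem_Icc.1 hi).1
  have hVR := o.V_le_VR hh s (k := j) (by have := (mem_Icc.1 hi).2; lia)
  exact ⟨(M.Vstar_mem_Icc (mem_Icc.1 hh).1 s).1.trans ((hV s).trans hVR), o.VR_le hh s hi⟩

lemma clip_VR_eq_self : clip M.H (o.VR i h) = o.VR i h :=
  clip_eq_self (o.VR_mem_Icc_of_Vstar_le hh hi hV)

lemma clip_V_eq_self : clip M.H (o.V i h) = o.V i h := by
  refine clip_eq_self fun s => ⟨(M.Vstar_mem_Icc (mem_Icc.1 hh).1 s).1.trans (hV s), ?_⟩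
  obtain ⟨j, rfl⟩ := Nat.exists_eq_add_of_le' (mem_Icc.1 hi).1
  exact (o.V_le_VR hh s (by have := (mem_Icc.1 hi).2; lia)).trans (o.VR_le hh s hi)

end Clip

section Visited

variable (hh : h ∈ Icc 1 M.H) {s : S} {a : A} (hk : k ≤ K) (hN : 1 ≤ o.N k h s a)

variable (hcb : 364 ≤ cb) (hι : 1 / 2 ≤ iota S A K M.H δ)
  (hgood : o.IsGood (7 * iota S A K M.H δ))

section Hoeffding

include hh hk hN hcb hι hgood

lemma abs_weightedAvg_Vstar_sub_le :
    |(weightedAvg (lrWeight M.H) (o.N k h s a) fun n => M.Vstar (h + 1) (o.nextState h s a n))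
        - M.P h s a ⬝ᵥ M.Vstar (h + 1)| ≤
      weightedAvg (lrWeight M.H) (o.N k h s a) fun n =>
        cb * √((M.H : ℝ) ^ 3 * iota S A K M.H δ / n) := by
  have conc : o.Concentrates (7 * iota S A K M.H δ) h (Probe.fixed M (M.Vstar (h + 1))) :=
    hgood h hh 0
  have hdev := (conc s a _ (mem_Icc.2 ⟨hN, o.N_mono hh s a hk le_rfl⟩)).hoeffding
    (Probe.isAveraging _) (by simp [Probe.fixed]) (Probe.bound_pos _).le (by linarith)
    (M.P_mem_stdSimplex h s a) (fun _ => Probe.abs_value_le _ _ _) hN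
  simp only [Probe.fixed, clip_eq_self (M.Vstar_mem_Icc (h := h + 1) (by lia))] at hdev
  have hsplit := map_sub (weightedAvg (lrWeight M.H) (o.N k h s a))
    (fun n => M.Vstar (h + 1) (o.nextState h s a n)) fun _ => M.P h s a ⬝ᵥ M.Vstar (h + 1)
  rw [(isAveraging_lrWeight M.H_pos).weightedAvg_const hN] at hsplit
  rw [← hsplit]
  have hbonus := mul_sqrt_div_le_weightedAvg (isAveraging_lrWeight M.H_pos) hN
    (y := (M.H : ℝ) ^ 3 * iota S A K M.H δ) (by positivity) (b := cb) (by linarith)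
  exact hdev.trans ((hoeffding_width_le (by linarith) (by positivity) (by linarith)
    (by positivity)).trans hbonus)

lemma Qstar_le_QUCB (hV : ∀ i ∈ Icc 1 k, M.Vstar (h + 1) ≤ o.V i (h + 1)) :
    M.Qstar h s a ≤ o.QUCB (k + 1) h s a := by
  have hdev := abs_le.1 (o.abs_weightedAvg_Vstar_sub_le hh hk hN hcb hι hgood)
  have hmono := (isAveraging_lrWeight M.H_pos).weightedAvg_mono
    (y := fun n => M.Vstar (h + 1) (o.nextState h s a n))
    (z := fun n => o.atVisit o.V h s a n (o.nextState h s a n)) fun n hn =>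
    hV _ (o.kvis_mem_Icc hh (mem_Icc.1 hn).1 (mem_Icc.1 hn).2 hk) _
  rw [M.Qstar_eq hh, o.QUCB_eq hh hk hN]
  linarith

lemma QLCB_le_Qstar (hV : ∀ i ∈ Icc 1 k, o.VLCB i (h + 1) ≤ M.Vstar (h + 1)) :
    o.QLCB (k + 1) h s a ≤ M.Qstar h s a := by
  have hdev := abs_le.1 (o.abs_weightedAvg_Vstar_sub_le hh hk hN hcb hι hgood)
  have hmono := (isAveraging_lrWeight M.H_pos).weightedAvg_mono
    (y := fun n => o.atVisit o.VLCB h s a n (o.nextState h s a n))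
    (z := fun n => M.Vstar (h + 1) (o.nextState h s a n)) fun n hn =>
    hV _ (o.kvis_mem_Icc hh (mem_Icc.1 hn).1 (mem_Icc.1 hn).2 hk) _
  rw [M.Qstar_eq hh, o.QLCB_eq hh hk hN]
  linarith

end Hoeffding

section ReferenceAdvantage

variable (hV : ∀ i ∈ Icc 1 k, M.Vstar (h + 1) ≤ o.V i (h + 1))

include hh hk hN hV in
/-- The reference values only decrease from one visit to the next, so that averaging their running
means overestimates their learning-rate average. -/
lemma dotProduct_Vstar_le :
    M.P h s a ⬝ᵥ M.Vstar (h + 1) ≤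
      (weightedAvg (lrWeight M.H) (o.N k h s a) fun n =>
          M.P h s a ⬝ᵥ (o.atVisit o.V h s a n - o.atVisit o.VR h s a n))
        + weightedAvg (lrMeanWeight M.H) (o.N k h s a) fun n =>
          M.P h s a ⬝ᵥ o.atVisit o.VR h s a n := by
  have hp := M.P_mem_stdSimplex h s a
  have hh' : h + 1 ∈ Icc 1 (M.H + 1) := by have := mem_Icc.1 hh; exact mem_Icc.2 ⟨by lia, by lia⟩
  have reference_anti := weightedAvg_lrWeight_le_weightedAvg_lrMeanWeight M.H_pos
    (y := fun n => M.P h s a ⬝ᵥ o.atVisit o.VR h s a n) fun i j hi hij hj =>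
      dotProduct_mono_of_mem_stdSimplex hp fun s' => o.VR_anti hh' s'
        (mem_Icc.1 (o.kvis_mem_Icc hh hi (hij.trans hj) hk)).1 (o.kvis_mono hh hi hij hj hk)
        ((mem_Icc.1 (o.kvis_mem_Icc hh (hi.trans hij) hj hk)).2.trans (by lia))
  calc M.P h s a ⬝ᵥ M.Vstar (h + 1)
      ≤ weightedAvg (lrWeight M.H) (o.N k h s a) fun n => M.P h s a ⬝ᵥ o.atVisit o.V h s a n :=
        (isAveraging_lrWeight M.H_pos).le_weightedAvg hN fun n hn =>
          dotProduct_mono_of_mem_stdSimplex hp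
            (hV _ (o.kvis_mem_Icc hh (mem_Icc.1 hn).1 (mem_Icc.1 hn).2 hk))
    _ = (weightedAvg (lrWeight M.H) (o.N k h s a) fun n =>
            M.P h s a ⬝ᵥ (o.atVisit o.V h s a n - o.atVisit o.VR h s a n))
          + weightedAvg (lrWeight M.H) (o.N k h s a) fun n =>
            M.P h s a ⬝ᵥ o.atVisit o.VR h s a n := by
        rw [← map_add]
        congr 1 with n
        rw [Pi.add_apply, ← dotProduct_add, sub_add_cancel]
    _ ≤ _ := by gcongr

include hh hk hV in
lemma clip_atVisit_eq_self {n : ℕ} (hn : n ∈ Icc 1 (o.N k h s a)) :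
    clip M.H (o.atVisit o.V h s a n) = o.atVisit o.V h s a n ∧
      clip M.H (o.atVisit o.VR h s a n) = o.atVisit o.VR h s a n := by
  have hvis := o.kvis_mem_Icc hh (mem_Icc.1 hn).1 (mem_Icc.1 hn).2 hk
  have hh' : h + 1 ∈ Icc 1 (M.H + 1) := by have := mem_Icc.1 hh; exact mem_Icc.2 ⟨by lia, by lia⟩
  have hvis' := Icc_subset_Icc_right (by lia : k ≤ K + 1) hvis
  exact ⟨o.clip_V_eq_self hh' hvis' (hV _ hvis), o.clip_VR_eq_self hh' hvis' (hV _ hvis)⟩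

include hh hk hN hcb hι hgood hV

lemma abs_weightedAvg_advantage_sub_le :
    |weightedAvg (lrWeight M.H) (o.N k h s a) fun n =>
        (o.atVisit o.V h s a n - o.atVisit o.VR h s a n) (o.nextState h s a n)
          - M.P h s a ⬝ᵥ (o.atVisit o.V h s a n - o.atVisit o.VR h s a n)| ≤
      cb * √(iota S A K M.H δ / o.N k h s a)
          * (√M.H * √(weightedVar (lrWeight M.H) (o.N k h s a) fun n =>
            (o.atVisit o.V h s a n - o.atVisit o.VR h s a n) (o.nextState h s a n)))
        + 182 * ((M.H : ℝ) ^ 2 * iota S A K M.H δ / (o.N k h s a : ℝ) ^ ((3 : ℝ) / 4)) := by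
  have hH : (1 : ℝ) ≤ M.H := by exact_mod_cast M.H_pos
  have hNK := mem_Icc.2 ⟨hN, o.N_mono hh s a hk le_rfl⟩
  have conc : o.Concentrates (7 * iota S A K M.H δ) h (Probe.advantage M) := hgood h hh 1
  have conc_sq : o.Concentrates (7 * iota S A K M.H δ) h (Probe.advantage M).sq := hgood h hh 2
  have hdev := (conc s a _ hNK).empirical (conc s a _ hNK) (conc_sq s a _ hNK)
    (Probe.isAveraging _) (Probe.isAveraging _)
    (fun n _ => by linarith [(Probe.advantage M).isAveraging.nonneg (o.N k h s a) n])
    (by simp [Probe.advantage]) (Probe.bound_pos _).le (by linarith) (M.P_mem_stdSimplex h s a)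
    (fun _ => Probe.abs_value_le _ _ _) hN
  have hvalue (n : ℕ) (hn : n ∈ Icc 1 (o.N k h s a)) :
      clip M.H (o.atVisit o.V h s a n) - clip M.H (o.atVisit o.VR h s a n)
        = o.atVisit o.V h s a n - o.atVisit o.VR h s a n := by
    obtain ⟨hclip, hclipR⟩ := o.clip_atVisit_eq_self hh hk hV hn
    rw [hclip, hclipR]
  simp only [Probe.advantage] at hdev
  rw [weightedAvg_congr _ fun n hn => by rw [hvalue n hn],
    weightedVar_congr _ fun n hn => by rw [hvalue n hn]] at hdev
  exact hdev.trans (empirical_width_le (by linarith) hH le_rfl hι (by positivity) (by positivity))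

lemma abs_weightedAvg_reference_sub_le :
    |weightedAvg (lrMeanWeight M.H) (o.N k h s a) fun n =>
        o.atVisit o.VR h s a n (o.nextState h s a n) - M.P h s a ⬝ᵥ o.atVisit o.VR h s a n| ≤
      cb * √(iota S A K M.H δ / o.N k h s a)
          * √(weightedVar uniformWeight (o.N k h s a) fun n =>
            o.atVisit o.VR h s a n (o.nextState h s a n))
        + 182 * ((M.H : ℝ) ^ 2 * iota S A K M.H δ / (o.N k h s a : ℝ) ^ ((3 : ℝ) / 4)) := by
  have hH : (1 : ℝ) ≤ M.H := by exact_mod_cast M.H_pos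
  have hNK := mem_Icc.2 ⟨hN, o.N_mono hh s a hk le_rfl⟩
  have conc : o.Concentrates (7 * iota S A K M.H δ) h
    (.reference M (lrMeanWeight M.H) (isAveraging_lrMeanWeight M.H_pos)) := hgood h hh 3
  have conc_mean : o.Concentrates (7 * iota S A K M.H δ) h
    (.reference M uniformWeight (isAveraging_uniformWeight.mono one_le_two)) := hgood h hh 4
  have conc_sq : o.Concentrates (7 * iota S A K M.H δ) h
    (Probe.reference M uniformWeight (isAveraging_uniformWeight.mono one_le_two)).sq := hgood h hh 5
  have weight_le (n : ℕ) (hn : n ∈ Icc 1 (o.N k h s a)) :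
      lrMeanWeight M.H (o.N k h s a) n ≤ 2 * uniformWeight (o.N k h s a) n := by
    rw [uniformWeight, if_pos (mem_Icc.1 hn).2, mul_one_div]
    exact lrMeanWeight_le M.H_pos _ _ hN
  have hdev := (conc s a _ hNK).empirical (conc_mean s a _ hNK) (conc_sq s a _ hNK)
    (Probe.isAveraging _) (Probe.isAveraging _) weight_le
    zero_le_two (Probe.bound_pos _).le (by linarith) (M.P_mem_stdSimplex h s a)
    (fun _ => Probe.abs_value_le _ _ _) hN
  have hclip (n : ℕ) (hn : n ∈ Icc 1 (o.N k h s a)) :=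
    (o.clip_atVisit_eq_self hh hk hV hn).2
  simp only [Probe.reference] at hdev
  rw [weightedAvg_congr _ fun n hn => by rw [hclip n hn],
    weightedVar_congr _ fun n hn => by rw [hclip n hn]] at hdev
  refine hdev.trans ?_
  simpa only [mul_one, Real.sqrt_one, one_mul] using
    empirical_width_le (c := 1) (by linarith) le_rfl hH hι (by positivity) (by positivity)

lemma Qstar_le_QR : M.Qstar h s a ≤ o.QR (k + 1) h s a := by
  have hadv := (abs_le.1 (o.abs_weightedAvg_advantage_sub_le hh hk hN hcb hι hgood hV)).1
  have href := (abs_le.1 (o.abs_weightedAvg_reference_sub_le hh hk hN hcb hι hgood hV)).1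
  have hbias := o.dotProduct_Vstar_le hh hk hN hV
  have lower_order := div_rpow_le_weightedAvg (isAveraging_lrWeight M.H_pos) hN
    (y := cb * (M.H : ℝ) ^ 2 * iota S A K M.H δ) (by positivity) (r := 3 / 4) (by norm_num)
  have cb_lower_order : 364 * ((M.H : ℝ) ^ 2 * iota S A K M.H δ / (o.N k h s a : ℝ) ^ ((3 : ℝ) / 4))
      ≤ cb * (M.H : ℝ) ^ 2 * iota S A K M.H δ / (o.N k h s a : ℝ) ^ ((3 : ℝ) / 4) := by
    rw [mul_assoc cb, mul_div_assoc cb]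
    gcongr
  rw [M.Qstar_eq hh, o.QR_eq hh hk hN, o.BR_eq hh s a hk]
  rw [← Pi.sub_def, map_sub] at hadv href
  linarith

end ReferenceAdvantage

end Visited

end QLAlg

namespace QLAlg

variable {S A : Type} [Fintype S] [Fintype A] [Nonempty S] [Nonempty A]
  [DecidableEq S] [DecidableEq A] {M : MDP S A} {K : ℕ} {cb δ : ℝ} {o : QLAlg M K cb δ} {h k : ℕ}

/-- At the beginning of episode `k` the optimal values lie between the pessimistic and the
optimistic estimates. -/
structure Brackets (o : QLAlg M K cb δ) (k : ℕ) : Prop where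
  Qstar_le_Q : ∀ h ∈ Icc 1 M.H, ∀ s a, M.Qstar h s a ≤ o.Q k h s a
  QLCB_le_Qstar : ∀ h ∈ Icc 1 M.H, ∀ s a, o.QLCB k h s a ≤ M.Qstar h s a
  VLCB_le_Vstar : ∀ h ∈ Icc 1 (M.H + 1), ∀ s, o.VLCB k h s ≤ M.Vstar h s

lemma brackets_one (o : QLAlg M K cb δ) : o.Brackets 1 where
  Qstar_le_Q h hh s a := (M.Qstar_mem_Icc (mem_Icc.1 hh).1 s a).2.trans_eq (o.Q_init h hh s a).symm
  QLCB_le_Qstar h hh s a :=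
    (o.QLCB_init h hh s a).trans_le (M.Qstar_mem_Icc (mem_Icc.1 hh).1 s a).1
  VLCB_le_Vstar h hh s := by
    refine le_of_eq_of_le ?_ (M.Vstar_mem_Icc (mem_Icc.1 hh).1 s).1
    rcases mem_Icc_or_eq_of_mem_Icc_succ hh with hh | rfl
    · exact o.VLCB_init h hh s
    · exact (o.V_terminal 1 s).2.2

namespace Brackets

lemma Vstar_le_V (hb : o.Brackets (k + 1)) (hh : h ∈ Icc 1 (M.H + 1)) (hk : k ≤ K) :
    M.Vstar h ≤ o.V (k + 1) h := by
  intro s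
  rcases mem_Icc_or_eq_of_mem_Icc_succ hh with hh | rfl
  · rw [o.V_succ_eq_sup' hh s hk]
    exact sup'_mono_fun fun a _ => hb.Qstar_le_Q h hh s a
  · rw [M.Vstar_terminal, (o.V_terminal _ s).1]

lemma succ (hcb : 364 ≤ cb) (hι : 1 / 2 ≤ iota S A K M.H δ)
    (hgood : o.IsGood (7 * iota S A K M.H δ)) (hk : k + 1 ≤ K) (hb : o.Brackets (k + 1)) :
    o.Brackets (k + 1 + 1) := by
  have hk1 : k + 1 ∈ Icc 1 K := mem_Icc.2 ⟨by lia, hk⟩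
  have hnext {h : ℕ} (hh : h ∈ Icc 1 M.H) : h + 1 ∈ Icc 1 (M.H + 1) := by simp_all
  have hN {h : ℕ} (hh : h ∈ Icc 1 M.H) {s : S} {a : A} (hv : o.Visits h s a (k + 1)) :
      1 ≤ o.N (k + 1) h s a := by
    rw [o.N_succ_of_visits hh hk hv]
    exact Nat.le_add_left _ _
  have hQLCB : ∀ h ∈ Icc 1 M.H, ∀ s a, o.QLCB (k + 1 + 1) h s a ≤ M.Qstar h s a := by
    intro h hh s a
    by_cases hv : o.Visits h s a (k + 1)
    · exact o.QLCB_le_Qstar hh hk (hN hh hv) hcb hι hgood fun i hi s' =>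
        (o.VLCB_mono (hnext hh) s' (mem_Icc.1 hi).1 (mem_Icc.1 hi).2 (by lia)).trans
          (hb.VLCB_le_Vstar _ (hnext hh) s')
    · rw [o.QLCB_upd _ hk1 h hh, if_neg hv]
      exact hb.QLCB_le_Qstar h hh s a
  refine ⟨fun h hh s a => ?_, hQLCB, fun h hh s => ?_⟩
  · rw [o.Q_upd _ hk1 h hh]
    split_ifs with hv
    · have hV (i : ℕ) (hi : i ∈ Icc 1 (k + 1)) : M.Vstar (h + 1) ≤ o.V i (h + 1) := fun s' =>
        (hb.Vstar_le_V (hnext hh) (by lia) s').trans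
          (o.V_anti (hnext hh) s' (mem_Icc.1 hi).1 (mem_Icc.1 hi).2 (by lia))
      exact le_min (o.Qstar_le_QR hh hk (hN hh hv) hcb hι hgood hV)
        (le_min (o.Qstar_le_QUCB hh hk (hN hh hv) hcb hι hgood hV) (hb.Qstar_le_Q h hh s a))
    · exact hb.Qstar_le_Q h hh s a
  · have hprev := hb.VLCB_le_Vstar h hh s
    rcases mem_Icc_or_eq_of_mem_Icc_succ hh with hh | rfl
    · rw [o.VLCB_upd _ hk1 h hh]
      split_ifs
      · exact max_le (sup'_mono_fun fun a _ => hQLCB h hh s a) hprev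
      · exact hprev
    · rw [(o.V_terminal _ s).2.2, M.Vstar_terminal]

lemma abs_V_sub_VR_le (hb : o.Brackets k) (hk : k ∈ Icc 1 K) (hh : h ∈ Icc 1 M.H) (s : S) :
    |o.V k h s - o.VR k h s| ≤ 1 := by
  obtain ⟨k, rfl⟩ := Nat.exists_eq_add_of_le' (mem_Icc.1 hk).1
  replace hk : k ≤ K := (Nat.le_succ k).trans (mem_Icc.1 hk).2
  have hh' : h ∈ Icc 1 (M.H + 1) := Icc_subset_Icc_right (Nat.le_succ _) hh
  have hV_le := o.V_le_VR hh' s hk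
  rw [abs_of_nonpos (sub_nonpos.2 hV_le)]
  rcases o.VR_eq_V_or_le hh s hk with ⟨-, hVR⟩ | ⟨-, hVR⟩
  · rw [hVR, sub_self, neg_zero]
    exact zero_le_one
  · linarith [hb.VLCB_le_Vstar h hh' s, hb.Vstar_le_V hh' hk s]

end Brackets

lemma IsGood.brackets (hgood : o.IsGood (7 * iota S A K M.H δ)) (hcb : 364 ≤ cb)
    (hι : 1 / 2 ≤ iota S A K M.H δ) (hk : k ∈ Icc 1 K) : o.Brackets k := by
  obtain ⟨hk1, hkK⟩ := mem_Icc.1 hk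
  clear hk
  induction k, hk1 using Nat.le_induction with
  | base => exact o.brackets_one
  | succ k hk1 ih =>
    obtain ⟨j, rfl⟩ := Nat.exists_eq_add_of_le' hk1
    exact (ih (by lia)).succ hcb hι hgood (by lia)

end QLAlg

/-! ## The failure probability -/

section LogFactor

variable (S A : Type) [Fintype S] [Fintype A] [Nonempty S] [Nonempty A] {K H : ℕ} {δ : ℝ}

lemma le_card_mul_card_mul (K : ℕ) (hH : 1 ≤ H) :
    (K : ℝ) ≤ Fintype.card S * Fintype.card A * (K * H) := by
  have hcard : 1 ≤ Fintype.card S * Fintype.card A * H :=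
    Nat.mul_pos (Nat.mul_pos Fintype.card_pos Fintype.card_pos) hH
  exact_mod_cast (Nat.le_mul_of_pos_left K hcard).trans_eq (by ring)

lemma half_le_iota (hK : 2 ≤ K) (hH : 1 ≤ H) (hδ0 : 0 < δ) (hδ1 : δ ≤ 1) :
    1 / 2 ≤ iota S A K H δ := by
  have hK' : (2 : ℝ) ≤ K := by exact_mod_cast hK
  have hL := hK'.trans (le_card_mul_card_mul S A K hH)
  have hlog := Real.log_le_log two_pos (hL.trans (le_div_self (by positivity) hδ0 hδ1))
  rw [iota]
  linarith [Real.log_two_gt_d9]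

lemma mul_exp_neg_iota_le (hK : 2 ≤ K) (hH : 1 ≤ H) (hδ0 : 0 < δ) (hδ1 : δ ≤ 1) :
    12 * (Fintype.card S * Fintype.card A * H * K ^ 2) * Real.exp (-(7 * iota S A K H δ)) ≤ δ := by
  have hK' : (2 : ℝ) ≤ K := by exact_mod_cast hK
  have hKL := le_card_mul_card_mul S A K hH
  rw [iota]
  set L : ℝ := Fintype.card S * Fintype.card A * (K * H) with hL
  have hL2 : 2 ≤ L := hK'.trans hKL
  have hexp : Real.exp (-(7 * Real.log (L / δ))) = δ ^ 7 / L ^ 7 := by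
    rw [← mul_neg, ← Real.log_inv, inv_div, ← div_pow,
      ← Real.exp_log (show 0 < (δ / L) ^ 7 by positivity), Real.log_pow]
    norm_num
  have hδ7 : δ ^ 7 ≤ δ := pow_le_of_le_one hδ0.le hδ1 (by norm_num)
  rw [hexp, ← mul_div_assoc, div_le_iff₀ (by positivity)]
  calc 12 * (Fintype.card S * Fintype.card A * H * K ^ 2) * δ ^ 7
      = 12 * (L * K) * δ ^ 7 := by rw [hL]; ring
    _ ≤ 2 ^ 5 * (L * L) * δ := by gcongr; norm_num
    _ ≤ L ^ 5 * (L * L) * δ := by gcongr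
    _ = δ * L ^ 7 := by ring

end LogFactor

lemma one_sub_le_toReal_measure_of_compl_le {Ω : Type*} {m0 : MeasurableSpace Ω} {μ : Measure Ω}
    [IsProbabilityMeasure μ] {s : Set Ω} {δ : ℝ} (hδ : 0 ≤ δ) (hs : μ sᶜ ≤ ENNReal.ofReal δ) :
    1 - δ ≤ (μ s).toReal := by
  have hcover : μ.real Set.univ ≤ μ.real s + μ.real sᶜ :=
    (congrArg μ.real (Set.union_compl_self s)).ge.trans (measureReal_union_le s sᶜ)
  have hcompl : μ.real sᶜ ≤ δ := ENNReal.toReal_le_of_le_ofReal hδ hs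
  rw [probReal_univ] at hcover
  rw [← Measure.real]
  linarith

/-- **Fidelity of the reference value** (Lemma 4, eq. (35) of the paper).
There is a universal constant `c₀ > 0` such that for any MDP, any `δ ∈ (0,1)` and any
bonus constant `cb ≥ c₀`, with probability at least `1 - δ` over the trajectories,
`|V_h^k(s) - V_h^{R,k}(s)| ≤ 2` for all `(k,h,s) ∈ [K] × [H] × S`. -/
theorem reference_value_fidelity_of_QEarlySettledAdvantage :
    ∃ c₀ : ℝ, 0 < c₀ ∧
      ∀ (S A : Type) [Fintype S] [Fintype A] [Nonempty S] [Nonempty A]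
        [DecidableEq S] [DecidableEq A]
        [MeasurableSpace S] [MeasurableSingletonClass S]
        [MeasurableSpace A] [MeasurableSingletonClass A]
        (M : MDP S A) (K : ℕ) (cb δ : ℝ)
        (Ω : Type) (m0 : MeasurableSpace Ω) (μ : Measure Ω)
        (𝓕 : Filtration ℕ m0) (alg : Ω → QLAlg M K cb δ),
        IsProbabilityMeasure μ → 0 < δ → δ < 1 → 1 ≤ K → c₀ ≤ cb →
        IsMDPTrajectory μ M K 𝓕 (fun k h ω => (alg ω).st k h)
          (fun k h ω => (alg ω).ac k h) →
        1 - δ ≤ (μ {ω | ∀ k ∈ Icc 1 K, ∀ h ∈ Icc 1 M.H, ∀ s,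
            |(alg ω).V k h s - (alg ω).VR k h s| ≤ 2}).toReal := by
  refine ⟨364, by norm_num, ?_⟩
  intro S A _ _ _ _ _ _ _ _ _ _ M K cb δ Ω m0 μ 𝓕 alg _ hδ0 hδ1 hK hcb htraj
  refine one_sub_le_toReal_measure_of_compl_le hδ0.le ?_
  set F : Set Ω := {ω | ∀ k ∈ Icc 1 K, ∀ h ∈ Icc 1 M.H, ∀ s,
    |(alg ω).V k h s - (alg ω).VR k h s| ≤ 2}
  have fidelity {ω : Ω} (hb : ∀ k ∈ Icc 1 K, (alg ω).Brackets k) : ω ∈ F :=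
    fun k hk h hh s => ((hb k hk).abs_V_sub_VR_le hk hh s).trans one_le_two
  rcases hK.eq_or_lt with rfl | hK
  · have hF : Fᶜ = ∅ := Set.compl_empty_iff.2 <| Set.eq_univ_of_forall fun ω =>
      fidelity fun k hk => mem_singleton.1 hk ▸ (alg ω).brackets_one
    rw [hF, measure_empty]
    exact zero_le
  · have hι := half_le_iota S A hK M.H_pos hδ0 hδ1.le
    calc μ Fᶜ ≤ μ {ω | ¬(alg ω).IsGood (7 * iota S A K M.H δ)} :=
          measure_mono fun ω hfail hgood => hfail (fidelity fun k hk => hgood.brackets hcb hι hk)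
      _ ≤ ENNReal.ofReal _ := QLAlg.measure_not_isGood_le htraj (by linarith)
      _ ≤ ENNReal.ofReal δ :=
          ENNReal.ofReal_le_ofReal (mul_exp_neg_iota_le S A hK M.H_pos hδ0 hδ1.le)
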